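/- Let d ≥ 3, P = -div(G(x)∇) as above, b_jk ∈ C₀^∞(ℝ^d) for 1 ≤ j,k ≤ d, and set R_c = - Σ_{j,k} R(j)* b_jk(x) R(k), where R(j) are the Riesz transform components of P. Then for any φ ∈ C₀^∞(ℝ), ‖R_c φ(P/λ)‖_{L²→L²} → 0 as λ → 0⁺. -/

import Mathlib

open MeasureTheory Filter Topology Complex
open scoped Real ENNReal FourierTransform ComplexConjugate

noncomputable section

/-- Euclidean space `ℝ^d`. -/
abbrev Ed (d : ℕ) : Type := EuclideanSpace ℝ (Fin d)

/-- `L²(ℝ^d)` with complex values. -/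
abbrev L2 (d : ℕ) := MeasureTheory.Lp ℂ 2 (volume : Measure (Ed d))

/-- The partial derivative `∂_j u`. -/
def pd (d : ℕ) (j : Fin d) (u : Ed d → ℂ) : Ed d → ℂ :=
  fun x => fderiv ℝ u x (EuclideanSpace.single j (1:ℝ))

/-- The operator `∑_{j,k} D_j (b_{jk} D_k) = - ∑_{j,k} ∂_j (b_{jk} ∂_k)` (complex
coefficients), applied to a function `u`. -/
def divGradC (d : ℕ) (b : Ed d → Fin d → Fin d → ℂ) (u : Ed d → ℂ) : Ed d → ℂ :=
  fun x => -∑ j : Fin d, ∑ k : Fin d,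
    fderiv ℝ (fun y => b y j k * fderiv ℝ u y (EuclideanSpace.single k (1:ℝ))) x
      (EuclideanSpace.single j (1:ℝ))

/-- `- div (G ∇ u) = ∑_{j,k} D_j (G_{jk} D_k) u` for a real coefficient matrix `G`. -/
def divGrad (d : ℕ) (G : Ed d → Fin d → Fin d → ℝ) (u : Ed d → ℂ) : Ed d → ℂ :=
  divGradC d (fun x j k => (G x j k : ℂ)) u

/-- The operation `a ↦ x·∇a` on real valued functions. -/
def xdotOp (d : ℕ) : (Ed d → ℝ) → Ed d → ℝ := fun a x => fderiv ℝ a x x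

/-- The operation `a ↦ x·∇a` on complex valued functions. -/
def xdotC (d : ℕ) : (Ed d → ℂ) → Ed d → ℂ := fun a x => fderiv ℝ a x x

/-- `a ∈ C_b^∞(ℝ^d)`: smooth with all derivatives bounded. -/
def CbSmooth (d : ℕ) (a : Ed d → ℝ) : Prop :=
  ContDiff ℝ (⊤ : ℕ∞) a ∧ ∀ n : ℕ, ∃ C : ℝ, ∀ x, ‖iteratedFDeriv ℝ n a x‖ ≤ C

/-- `a ∈ S_dil(ℝ^d)` : `a ∈ C_b^∞` and `(x·∇)^n a ∈ L^∞` for all `n`. -/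
def MemSdil (d : ℕ) (a : Ed d → ℝ) : Prop :=
  CbSmooth d a ∧ ∀ n : ℕ, ∃ C : ℝ, ∀ x, |(xdotOp d)^[n] a x| ≤ C

/-- Complex-valued version of `S_dil(ℝ^d)`. -/
def MemSdilC (d : ℕ) (a : Ed d → ℂ) : Prop :=
  (ContDiff ℝ (⊤ : ℕ∞) a ∧ ∀ n : ℕ, ∃ C : ℝ, ∀ x, ‖iteratedFDeriv ℝ n a x‖ ≤ C) ∧
  ∀ n : ℕ, ∃ C : ℝ, ∀ x, ‖(xdotC d)^[n] a x‖ ≤ C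

/-- The coefficient matrix is symmetric with real entries. -/
def SymmetricCoef (d : ℕ) (G : Ed d → Fin d → Fin d → ℝ) : Prop := ∀ x j k, G x j k = G x k j

/-- Uniform ellipticity: `Λ₊ ≥ G(x) ≥ Λ₋ > 0` as quadratic forms. -/
def UniformlyElliptic (d : ℕ) (G : Ed d → Fin d → Fin d → ℝ) : Prop :=
  ∃ lam Lam : ℝ, 0 < lam ∧ ∀ (x : Ed d) (v : Fin d → ℝ),
    lam * ∑ j, v j ^ 2 ≤ (∑ j, ∑ k, G x j k * v j * v k) ∧
      (∑ j, ∑ k, G x j k * v j * v k) ≤ Lam * ∑ j, v j ^ 2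

/-- The standing assumptions of the paper: `G` symmetric with entries in `C_b^∞`,
uniformly elliptic. -/
def Standing (d : ℕ) (G : Ed d → Fin d → Fin d → ℝ) : Prop :=
  (∀ j k, CbSmooth d fun x => G x j k) ∧ SymmetricCoef d G ∧ UniformlyElliptic d G

/-- `G = I_d + H`. -/
def Gmat (d : ℕ) (H : Ed d → Fin d → Fin d → ℝ) : Ed d → Fin d → Fin d → ℝ :=
  fun x j k => (if j = k then 1 else 0) + H x j k

/-- Long range condition `|∂^α (G - I_d)| ≤ C_α ⟨x⟩^{-μ-|α|}`. -/
def LongRange (d : ℕ) (G : Ed d → Fin d → Fin d → ℝ) (μ : ℝ) : Prop :=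
  ∀ (j k : Fin d) (n : ℕ), ∃ C : ℝ, ∀ x : Ed d,
    ‖iteratedFDeriv ℝ n (fun y => G y j k - if j = k then (1:ℝ) else 0) x‖
      ≤ C * ((1 + ‖x‖ ^ 2) ^ (-(μ + n) / 2) : ℝ)

/-- `R` is the resolvent `(P - z)⁻¹` of the self-adjoint realization of
`P = - div (G ∇·)`: for every `f ∈ L²`, `g = R f` solves `(P - z) g = f` in the sense
of distributions (this characterizes the resolvent uniquely). -/
def IsWeakResolvent (d : ℕ) (G : Ed d → Fin d → Fin d → ℝ) (z : ℂ)
    (R : L2 d →L[ℂ] L2 d) : Prop :=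
  ∀ (f : L2 d) (φ : SchwartzMap (Ed d) ℂ),
    (∫ x, (R f) x * divGrad d G (⇑φ) x) - z * (∫ x, (R f) x * φ x) = ∫ x, f x * φ x

/-- The japanese bracket weight `⟨x⟩^s = (1+|x|²)^{s/2}`. -/
def jweight (d : ℕ) (s : ℝ) : Ed d → ℝ := fun x => (1 + ‖x‖ ^ 2) ^ (s / 2)

/-- The dilation group `(e^{itA} u)(x) = e^{td/2} u(e^t x)`, where
`A = (x·∇ + ∇·x)/(2i)` is the generator of dilations. -/
def dil (d : ℕ) (t : ℝ) (u : Ed d → ℂ) : Ed d → ℂ :=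
  fun x => (Real.exp (t * d / 2) : ℂ) * u (Real.exp t • x)

/-- The `L²` inner product of two functions (conjugate linear in the first variable,
as is Mathlib's convention). -/
def pairL2 (d : ℕ) (u v : Ed d → ℂ) : ℂ := ∫ x : Ed d, (starRingEnd ℂ) (u x) * v x

/-- The resolvent `(hA - z)⁻¹ = (1/i) ∫₀^{±∞} e^{-itz} e^{ithA} dt` (`± Im z < 0`) of the
(rescaled) generator of dilations, realized by its defining integral formula. -/
def resDil (d : ℕ) (h : ℝ) (z : ℂ) (u : Ed d → ℂ) : Ed d → ℂ := fun x =>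
  if z.im < 0 then
    Complex.I⁻¹ * ∫ t in Set.Ici (0:ℝ), Complex.exp (-(Complex.I * t * z)) * dil d (t * h) u x
  else
    -Complex.I⁻¹ * ∫ t in Set.Iic (0:ℝ), Complex.exp (-(Complex.I * t * z)) * dil d (t * h) u x

/-- `sin(τ A) u = (e^{iτA} - e^{-iτA}) u / (2i)`. -/
def sinA (d : ℕ) (τ : ℝ) (u : Ed d → ℂ) : Ed d → ℂ :=
  fun x => (dil d τ u x - dil d (-τ) u x) / (2 * Complex.I)

/-- `F(hA) = arctan(hA)` realized through `arctan λ = ∫₀^∞ sin(tλ) e^{-t} dt / t`. -/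
def arctanA (d : ℕ) (h : ℝ) (u : Ed d → ℂ) : Ed d → ℂ :=
  fun x => ∫ t in Set.Ioi (0:ℝ), ((Real.exp (-t) / t : ℝ) : ℂ) * sinA d (t * h) u x

/-- Coefficients of the commutator `i[P,A] = ∑ D_j (2G_{jk} - x·∇G_{jk}) D_k`. -/
def commCoef (d : ℕ) (G : Ed d → Fin d → Fin d → ℝ) : Ed d → Fin d → Fin d → ℝ :=
  fun x j k => 2 * G x j k - xdotOp d (fun y => G y j k) x

/-- `P_τ = e^{-iτA} (i[P,A]) e^{iτA}` applied to a function. -/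
def ptauFun (d : ℕ) (G : Ed d → Fin d → Fin d → ℝ) (τ : ℝ) (u : Ed d → ℂ) : Ed d → ℂ :=
  dil d (-τ) (divGrad d (commCoef d G) (dil d τ u))

/-- Coefficients of `P_τ = e^{-iτA} (i[P,A]) e^{iτA}` for `P = -div((I+H)∇)`;
indeed `e^{-iτA} (∑ D_j b D_k) e^{iτA} = e^{2τ} ∑ D_j b(e^{-τ}x) D_k`. -/
def ptauCoef (d : ℕ) (H : Ed d → Fin d → Fin d → ℝ) (τ : ℝ) : Ed d → Fin d → Fin d → ℝ :=
  fun x j k => Real.exp (2 * τ) * commCoef d (Gmat d H) (Real.exp (-τ) • x) j k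

/-- Coefficients of `Q_s = ∫₀¹ (d P_τ / dτ)|_{τ=σs} dσ`. -/
def qCoef (d : ℕ) (H : Ed d → Fin d → Fin d → ℝ) (s : ℝ) : Ed d → Fin d → Fin d → ℝ :=
  fun x j k => ∫ σ in (0:ℝ)..(1:ℝ), deriv (fun τ => ptauCoef d H τ x j k) (σ * s)

/-- Coefficients of `B_τ = τ ∫₀¹ s Q_{sτ} ds`. -/
def bCoef (d : ℕ) (H : Ed d → Fin d → Fin d → ℝ) (τ : ℝ) : Ed d → Fin d → Fin d → ℝ :=
  fun x j k => τ * ∫ s in (0:ℝ)..(1:ℝ), s * qCoef d H (s * τ) x j k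

/-- The Fourier multiplier `|D|` (with symbol `|ξ|`). -/
def absD (d : ℕ) (u : Ed d → ℂ) : Ed d → ℂ :=
  fun x => 𝓕⁻ (fun ξ : Ed d => (‖ξ‖ : ℂ) * 𝓕 u ξ) x

/-- `‖ |D| w ‖_{L²}`, computed on the Fourier side (Plancherel). -/
def Dnorm (d : ℕ) (w : Ed d → ℂ) : ℝ :=
  (eLpNorm (fun ξ : Ed d => (‖ξ‖ : ℂ) * 𝓕 w ξ) 2 volume).toReal

/-- A general Fourier multiplier `ρ(D)`. -/
def multD (d : ℕ) (ρ : Ed d → ℂ) (u : Ed d → ℂ) : Ed d → ℂ :=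
  fun x => 𝓕⁻ (fun ξ : Ed d => ρ ξ * 𝓕 u ξ) x

/-- The operator `A = (x·∇ + ∇·x)/(2i) = (x·∇ + d/2)/i` applied to a function. -/
def opA (d : ℕ) (u : Ed d → ℂ) : Ed d → ℂ :=
  fun x => (fderiv ℝ u x x + (d / 2 : ℂ) * u x) / Complex.I

/-- The functions `F_ν(λ) = ∫₀^∞ sin(tλ) t/(t²+ν²) e^{-t} dt` approximating `arctan`. -/
def Fnu (ν lam : ℝ) : ℝ :=
  ∫ t in Set.Ioi (0:ℝ), Real.sin (t * lam) * (t / (t ^ 2 + ν ^ 2)) * Real.exp (-t)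

/-- `m`-admissible family in `S_dil(ℝ^d)`:
`‖∂_τ^k (x·∇)^n b_τ‖_{L^∞} ≤ C_{kn} e^{m|τ|}` for all `k, n`. -/
def AdmissibleCoeff (d : ℕ) (m : ℕ) (b : ℝ → Ed d → ℂ) : Prop :=
  (∀ τ, MemSdilC d (b τ)) ∧
  (∀ (n : ℕ) (x : Ed d), ContDiff ℝ (⊤ : ℕ∞) fun τ => (xdotC d)^[n] (b τ) x) ∧
  ∀ k n : ℕ, ∃ C : ℝ, ∀ (τ : ℝ) (x : Ed d),
    ‖iteratedDeriv k (fun σ => (xdotC d)^[n] (b σ) x) τ‖ ≤ C * Real.exp (m * |τ|)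

/-- `m`-admissible family of differential operators `B_τ = ∑ D_j b_{jk,τ} D_k`. -/
def AdmissibleOp (d : ℕ) (m : ℕ) (B : ℝ → Ed d → Fin d → Fin d → ℂ) : Prop :=
  ∀ j k, AdmissibleCoeff d m fun τ x => B τ x j k

/-- Functions that are continuous and bounded on `[0,∞)` (the spectrum of `P`). -/
def GoodSymbol (φ : ℝ → ℂ) : Prop :=
  Continuous φ ∧ ∃ C : ℝ, ∀ lam : ℝ, 0 ≤ lam → ‖φ lam‖ ≤ C

/-- The (continuous bounded) functional calculus `φ ↦ φ(P)` of the nonnegative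
self-adjoint operator `P = -div(G∇)`, characterized by: it is linear and
multiplicative on continuous functions bounded on `[0,∞) ⊇ spec(P)`, compatible with
sup-norm bounds and adjoints, only depends on the restriction of the symbol to
`[0,∞)`, and sends `λ ↦ (λ - z)⁻¹` to the resolvent `(P - z)⁻¹`.  These properties
determine `φ(P)` uniquely for every `φ` continuous and vanishing at infinity.
Moreover `0` is not an eigenvalue of `P` (field `ker_triv`). -/
structure SpectralCalc (d : ℕ) (G : Ed d → Fin d → Fin d → ℝ) where
  map : (ℝ → ℂ) → (L2 d →L[ℂ] L2 d)
  map_congr : ∀ φ ψ, GoodSymbol φ → GoodSymbol ψ →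
    (∀ lam : ℝ, 0 ≤ lam → φ lam = ψ lam) → map φ = map ψ
  map_add : ∀ φ ψ, GoodSymbol φ → GoodSymbol ψ →
    map (fun lam => φ lam + ψ lam) = map φ + map ψ
  map_smul : ∀ (c : ℂ) φ, GoodSymbol φ → map (fun lam => c * φ lam) = c • map φ
  map_mul : ∀ φ ψ, GoodSymbol φ → GoodSymbol ψ →
    map (fun lam => φ lam * ψ lam) = (map φ).comp (map ψ)
  map_norm : ∀ (φ) (C : ℝ), (∀ lam : ℝ, 0 ≤ lam → ‖φ lam‖ ≤ C) → ‖map φ‖ ≤ C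
  map_star : ∀ φ, GoodSymbol φ →
    ContinuousLinearMap.adjoint (map φ) = map (fun lam => (starRingEnd ℂ) (φ lam))
  map_resolvent : ∀ z : ℂ, z.im ≠ 0 →
    IsWeakResolvent d G z (map fun lam => ((lam : ℂ) - z)⁻¹)
  ker_triv : ∀ f : L2 d,
    (∀ φ : SchwartzMap (Ed d) ℂ, (∫ x, f x * divGrad d G (⇑φ) x) = 0) → f = 0

/-- `Rj = ∂_j P^{-1/2}` is the `j`-th Riesz transform of `P`, defined as the strong
limit `s-lim_n π^{-1/2} ∂_j ∫_{1/n}^n e^{-tP} dt/√t`; here `gn n` is the vector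
integral `∫_{1/n}^n e^{-tP} f dt/√t` and `wn n` is its distributional `∂_j`
derivative. -/
def RieszOf (d : ℕ) (G : Ed d → Fin d → Fin d → ℝ) (S : SpectralCalc d G) (j : Fin d)
    (Rj : L2 d →L[ℂ] L2 d) : Prop :=
  ∀ (f : L2 d) (gn wn : ℕ → L2 d),
    (∀ n : ℕ, gn n = ∫ t in Set.Icc ((n : ℝ)⁻¹) (n : ℝ),
        ((Real.sqrt t)⁻¹ : ℝ) • (S.map (fun lam => Complex.exp (-(t : ℂ) * ((max lam 0 : ℝ) : ℂ))) f)) →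
    (∀ (n : ℕ) (φ : SchwartzMap (Ed d) ℂ),
        (∫ x, (wn n) x * φ x) = -∫ x, (gn n) x * pd d j (⇑φ) x) →
    Tendsto (fun n : ℕ => ((Real.sqrt Real.pi)⁻¹ : ℝ) • wn n) atTop (𝓝 (Rj f))


section
open MeasureTheory Filter Topology Complex
open scoped Real ENNReal FourierTransform ComplexConjugate
namespace RC

/-- Schwartz functions. -/
abbrev Sd (d : ℕ) := SchwartzMap (Ed d) ℂ

variable {d : ℕ}

/-- Partial derivative on Schwartz space. -/
def D (j : Fin d) : Sd d →ₗ[ℂ] Sd d where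
  toFun g := LineDeriv.lineDerivOp (EuclideanSpace.single j (1:ℝ) : Ed d) g
  map_add' f g := LineDeriv.lineDerivOp_add _ f g
  map_smul' c g := LineDeriv.lineDerivOp_smul _ c g

lemma D_apply (j : Fin d) (g : Sd d) (x : Ed d) :
    D j g x = fderiv ℝ g x (EuclideanSpace.single j (1:ℝ)) := rfl

lemma D_eq_pd (j : Fin d) (g : Sd d) : ⇑(D j g) = pd d j ⇑g := rfl

/-- Multiplication by a real function. -/
def M (a : Ed d → ℝ) : Sd d →ₗ[ℂ] Sd d :=
  (SchwartzMap.smulLeftCLM ℂ (fun x => (a x : ℂ)) : Sd d →L[ℂ] Sd d)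

/-- Temperate growth. -/
abbrev TG (a : Ed d → ℝ) : Prop := Function.HasTemperateGrowth a

lemma TG.cplx {a : Ed d → ℝ} (ha : TG a) :
    Function.HasTemperateGrowth (fun x => (a x : ℂ)) :=
  Function.Complex.hasTemperateGrowth_ofReal.comp ha

lemma M_apply {a : Ed d → ℝ} (ha : TG a) (g : Sd d) (x : Ed d) : M a g x = a x * g x := by
  change SchwartzMap.smulLeftCLM ℂ (fun x => (a x : ℂ)) g x = _
  rw [SchwartzMap.smulLeftCLM_apply_apply ha.cplx]; rfl

/-- Partial derivative of a real function. -/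
def dd (j : Fin d) (a : Ed d → ℝ) : Ed d → ℝ :=
  fun x => fderiv ℝ a x (EuclideanSpace.single j (1:ℝ))

lemma CbSmooth.tg {a : Ed d → ℝ} (ha : CbSmooth d a) : TG a := by
  refine ⟨ha.1, fun n => ?_⟩
  obtain ⟨C, hC⟩ := ha.2 n
  exact ⟨0, C, fun x => by simpa using hC x⟩

lemma TG.diff {a : Ed d → ℝ} (ha : TG a) : Differentiable ℝ a :=
  ha.1.differentiable (by simp)

lemma TG.dd {a : Ed d → ℝ} (ha : TG a) (j : Fin d) : TG (dd j a) := by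
  have h1 : Function.HasTemperateGrowth (fderiv ℝ a) := by
    refine ⟨ha.1.fderiv_right (by simp), fun n => ?_⟩
    obtain ⟨k, C, h⟩ := ha.2 (n+1)
    refine ⟨k, C, fun x => ?_⟩
    rw [norm_iteratedFDeriv_fderiv]
    exact h x
  exact (ContinuousLinearMap.hasTemperateGrowth
    (ContinuousLinearMap.apply ℝ ℝ (EuclideanSpace.single j (1:ℝ) : Ed d))).comp h1

lemma CbSmooth.bdd {a : Ed d → ℝ} (ha : CbSmooth d a) : ∃ C, ∀ x, |a x| ≤ C := by
  obtain ⟨C, hC⟩ := ha.2 0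
  exact ⟨C, fun x => by simpa using hC x⟩

lemma CbSmooth.dd_bdd {a : Ed d → ℝ} (ha : CbSmooth d a) (j : Fin d) :
    ∃ C, ∀ x, |dd j a x| ≤ C := by
  obtain ⟨C, hC⟩ := ha.2 1
  refine ⟨C, fun x => ?_⟩
  have h1 : ‖fderiv ℝ a x‖ ≤ C := by
    have := hC x
    rwa [← zero_add 1, ← norm_iteratedFDeriv_fderiv, norm_iteratedFDeriv_zero] at this
  have h2 := (fderiv ℝ a x).le_opNorm (EuclideanSpace.single j (1:ℝ) : Ed d)
  simp at h2
  exact h2.trans h1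

lemma D_comm (j k : Fin d) (g : Sd d) : D j (D k g) = D k (D j g) := by
  ext x
  have h : ∀ (i m : Fin d), D i (D m g) x = fderiv ℝ (fderiv ℝ g) x
      (EuclideanSpace.single i (1:ℝ)) (EuclideanSpace.single m (1:ℝ)) := by
    intro i m
    rw [D_apply]
    have : (⇑(D m g)) = fun y => (fderiv ℝ g y) (EuclideanSpace.single m (1:ℝ)) := rfl
    rw [this]
    have hd : DifferentiableAt ℝ (fderiv ℝ (⇑g)) x :=
      ((g.smooth 2).fderiv_right (m := 1) (by norm_num)).differentiable (by norm_num) x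
    rw [fderiv_clm_apply hd (by fun_prop)]
    simp
  rw [h, h]
  have hs : IsSymmSndFDerivAt ℝ (⇑g) x :=
    ((g.smooth 2).contDiffAt).isSymmSndFDerivAt (by simp)
  exact hs _ _

lemma D_M {a : Ed d → ℝ} (ha : TG a) (j : Fin d) (g : Sd d) :
    D j (M a g) = M a (D j g) + M (dd j a) g := by
  ext x
  have h1 : (⇑(M a g)) = fun y => (a y : ℂ) * g y := funext (M_apply ha g)
  have h2 : HasFDerivAt (fun y => (a y : ℂ)) (Complex.ofRealCLM.comp (fderiv ℝ a x)) x :=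
    Complex.ofRealCLM.hasFDerivAt.comp x (ha.diff x).hasFDerivAt
  have h3 : HasFDerivAt (fun y => (a y : ℂ) * g y) _ x := h2.mul (g.hasFDerivAt x)
  rw [D_apply, h1, h3.fderiv]
  change _ = M a (D j g) x + M (dd j a) g x
  rw [M_apply ha, M_apply (ha.dd j), D_apply]
  simp [dd, mul_comm]

lemma M_M {a b : Ed d → ℝ} (ha : TG a) (hb : TG b) (g : Sd d) :
    M a (M b g) = M (fun x => a x * b x) g := by
  ext x
  rw [M_apply ha, M_apply hb, M_apply (a := fun x => a x * b x) (ha.mul hb)]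
  push_cast; ring

/-- The embedding into `L²`. -/
def L : Sd d →ₗ[ℂ] L2 d := (SchwartzMap.toLpCLM ℂ ℂ 2 volume : Sd d →L[ℂ] L2 d)

lemma L_ae (g : Sd d) : ⇑(L g) =ᵐ[volume] ⇑g := SchwartzMap.coeFn_toLp g 2 volume

lemma L_dense : DenseRange (L : Sd d → L2 d) :=
  SchwartzMap.denseRange_toLpCLM (F := ℂ) ENNReal.ofNat_ne_top

lemma inner_L (f g : Sd d) : inner ℂ (L f) (L g) = ∫ x, conj (f x) * g x := by
  have := SchwartzMap.inner_toL2_toL2_eq f g volume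
  change inner ℂ (f.toLp 2 volume) (g.toLp 2 volume) = _
  rw [this]
  congr 1; ext x; simp [mul_comm]

/-- pairing of an `L²` function with a Schwartz function -/
lemma inner_L_right (f : L2 d) (g : Sd d) : inner ℂ f (L g) = ∫ x, conj (f x) * g x := by
  rw [L2.inner_def]
  apply integral_congr_ae
  filter_upwards [L_ae g] with x hx
  rw [hx]; simp [mul_comm]

lemma inner_L_left (f : L2 d) (g : Sd d) : inner ℂ (L g) f = ∫ x, f x * conj (g x) := by
  rw [L2.inner_def]
  apply integral_congr_ae
  filter_upwards [L_ae g] with x hx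
  rw [hx]; simp

/-- Complex conjugation on Schwartz space. -/
def cj (g : Sd d) : Sd d :=
  SchwartzMap.postcompCLM (𝕜 := ℝ) (Complex.conjCLE : ℂ →L[ℝ] ℂ) g

@[simp] lemma cj_apply (g : Sd d) (x : Ed d) : cj g x = conj (g x) := rfl

lemma cj_cj (g : Sd d) : cj (cj g) = g := by ext x; simp

lemma D_cj (j : Fin d) (g : Sd d) : D j (cj g) = cj (D j g) := by
  ext x
  rw [D_apply, cj_apply, D_apply]
  have h : HasFDerivAt (⇑(cj g)) ((Complex.conjCLE : ℂ →L[ℝ] ℂ).comp (fderiv ℝ g x)) x :=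
    (Complex.conjCLE : ℂ →L[ℝ] ℂ).hasFDerivAt.comp x (g.hasFDerivAt x)
  rw [h.fderiv]; rfl

lemma M_cj {a : Ed d → ℝ} (ha : TG a) (g : Sd d) : M a (cj g) = cj (M a g) := by
  ext x
  rw [M_apply ha, cj_apply, cj_apply, M_apply ha]; simp

lemma ibp (j : Fin d) (f g : Sd d) : inner ℂ (L f) (L (D j g)) = -inner ℂ (L (D j f)) (L g) := by
  rw [inner_L, inner_L]
  have := SchwartzMap.integral_mul_lineDerivOp_right_eq_neg_left (μ := volume) (cj f) g
    (EuclideanSpace.single j (1:ℝ) : Ed d)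
  have h2 : LineDeriv.lineDerivOp (EuclideanSpace.single j (1:ℝ) : Ed d) (cj f) = cj (D j f) :=
    D_cj j f
  rw [h2] at this
  exact this

lemma M_symm {a : Ed d → ℝ} (ha : TG a) (f g : Sd d) :
    inner ℂ (L f) (L (M a g)) = inner ℂ (L (M a f)) (L g) := by
  rw [inner_L, inner_L]
  congr 1; ext x
  rw [M_apply ha, M_apply ha]; simp; ring

lemma norm_L_sq (f : Sd d) : ‖L f‖ ^ 2 = ∫ x, ‖f x‖ ^ 2 := by
  have h := inner_self_eq_norm_sq_to_K (𝕜 := ℂ) (L f)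
  rw [inner_L] at h
  have h2 : ∀ x, conj (f x) * f x = ((‖f x‖ ^ 2 : ℝ) : ℂ) := fun x => by
    rw [mul_comm, Complex.mul_conj, Complex.normSq_eq_norm_sq]
  simp_rw [h2] at h
  rw [integral_complex_ofReal] at h
  have : ((‖L f‖ ^ 2 : ℝ) : ℂ) = ((∫ x, ‖f x‖ ^ 2 : ℝ) : ℂ) := by rw [h]; push_cast; rfl
  exact_mod_cast this

lemma integrable_sq (f : Sd d) : Integrable (fun x => ‖f x‖ ^ 2) :=
  (f.memLp 2 volume).integrable_norm_pow (by norm_num)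

lemma norm_L_le {C : ℝ} (hC : 0 ≤ C) (f g : Sd d) (h : ∀ x, ‖f x‖ ≤ C * ‖g x‖) :
    ‖L f‖ ≤ C * ‖L g‖ := by
  apply le_of_sq_le_sq _ (by positivity)
  rw [mul_pow, norm_L_sq, norm_L_sq, ← integral_const_mul]
  apply integral_mono (integrable_sq f) ((integrable_sq g).const_mul _)
  intro x
  simp only
  rw [← mul_pow]
  exact pow_le_pow_left₀ (norm_nonneg _) (h x) 2

lemma norm_M_le {a : Ed d → ℝ} (ha : TG a) {C : ℝ} (hC : ∀ x, |a x| ≤ C) (g : Sd d) :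
    ‖L (M a g)‖ ≤ C * ‖L g‖ := by
  apply norm_L_le ((abs_nonneg _).trans (hC 0))
  intro x
  rw [M_apply ha, norm_mul]
  gcongr
  simpa using hC x

end RC
end

section
open MeasureTheory Filter Topology Complex
open scoped Real ENNReal FourierTransform ComplexConjugate
namespace RC
variable {d : ℕ}

/-- `P` on Schwartz space. -/
def Pop (G : Ed d → Fin d → Fin d → ℝ) : Sd d →ₗ[ℂ] Sd d :=
  -∑ j, ∑ k, (D j) ∘ₗ (M fun x => G x j k) ∘ₗ (D k)

lemma Pop_def (G : Ed d → Fin d → Fin d → ℝ) (g : Sd d) :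
    Pop G g = -∑ j, ∑ k, D j (M (fun x => G x j k) (D k g)) := by
  simp [Pop, LinearMap.sum_apply]

lemma sum_apply' {ι : Type*} (s : Finset ι) (f : ι → Sd d) (x : Ed d) :
    (∑ i ∈ s, f i) x = ∑ i ∈ s, f i x := by
  classical
  induction s using Finset.induction_on with
  | empty => simp
  | insert a s ha ih => 
    rw [Finset.sum_insert ha, Finset.sum_insert ha, ← ih]; rfl

lemma Pop_coe {G : Ed d → Fin d → Fin d → ℝ} (hT : ∀ j k, TG fun x => G x j k) (g : Sd d) :
    ⇑(Pop G g) = divGrad d G ⇑g := by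
  funext x
  rw [Pop_def]
  change -((∑ j, ∑ k, D j (M (fun x => G x j k) (D k g))) x) = _
  unfold divGrad divGradC
  rw [sum_apply']
  simp_rw [sum_apply']
  congr 1
  refine Finset.sum_congr rfl fun j _ => Finset.sum_congr rfl fun k _ => ?_
  rw [D_apply]
  congr 2
  funext y
  rw [M_apply (hT j k)]; rfl

lemma inner_P {G : Ed d → Fin d → Fin d → ℝ} (f g : Sd d) :
    inner ℂ (L f) (L (Pop G g)) = ∑ j, ∑ k, inner ℂ (L (D j f)) (L (M (fun x => G x j k) (D k g))) := by
  rw [Pop_def, map_neg, inner_neg_right, map_sum, inner_sum, ← Finset.sum_neg_distrib]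
  refine Finset.sum_congr rfl fun j _ => ?_
  rw [map_sum, inner_sum, ← Finset.sum_neg_distrib]
  refine Finset.sum_congr rfl fun k _ => ?_
  rw [ibp, neg_neg]

lemma integrable_conj_mul (f g : Sd d) : Integrable (fun x => conj (f x) * g x) :=
  MemLp.integrable_mul (p := 2) (q := 2) ((cj f).memLp 2 volume) (g.memLp 2 volume)

lemma ellip_pt {G : Ed d → Fin d → Fin d → ℝ} {lam : ℝ}
    (h : ∀ (x : Ed d) (v : Fin d → ℝ),
      lam * ∑ j, v j ^ 2 ≤ (∑ j, ∑ k, G x j k * v j * v k)) (x : Ed d) (v : Fin d → ℂ) :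
    lam * ∑ j, ‖v j‖ ^ 2 ≤ ∑ j, ∑ k, (conj (v j) * (G x j k * v k)).re := by
  have h1 := h x (fun j => (v j).re)
  have h2 := h x (fun j => (v j).im)
  have e1 : ∑ j, ‖v j‖ ^ 2 = ∑ j, (v j).re ^ 2 + ∑ j, (v j).im ^ 2 := by
    rw [← Finset.sum_add_distrib]
    refine Finset.sum_congr rfl fun j _ => ?_
    rw [← Complex.normSq_eq_norm_sq, Complex.normSq_apply]; ring
  have e2 : ∑ j, ∑ k, (conj (v j) * (G x j k * v k)).re =
      (∑ j, ∑ k, G x j k * (v j).re * (v k).re) + (∑ j, ∑ k, G x j k * (v j).im * (v k).im) := by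
    simp_rw [← Finset.sum_add_distrib]
    refine Finset.sum_congr rfl fun j _ => Finset.sum_congr rfl fun k _ => ?_
    simp; ring
  rw [e1, e2, mul_add]
  exact add_le_add h1 h2

lemma ellip {G : Ed d → Fin d → Fin d → ℝ} (hT : ∀ j k, TG fun x => G x j k) {lam : ℝ}
    (h : ∀ (x : Ed d) (v : Fin d → ℝ),
      lam * ∑ j, v j ^ 2 ≤ (∑ j, ∑ k, G x j k * v j * v k)) (v : Fin d → Sd d) :
    lam * ∑ j, ‖L (v j)‖ ^ 2 ≤
      (∑ j, ∑ k, inner ℂ (L (v j)) (L (M (fun x => G x j k) (v k)))).re := by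
  have e1 : lam * ∑ j, ‖L (v j)‖ ^ 2 = ∫ x, lam * ∑ j, ‖v j x‖ ^ 2 := by
    rw [integral_const_mul, integral_finsetSum _ (fun j _ => integrable_sq (v j))]
    simp_rw [norm_L_sq]
  have hI : ∀ j k, Integrable fun x => (conj (v j x) * (G x j k * v k x)).re := by
    intro j k
    have := (integrable_conj_mul (v j) (M (fun x => G x j k) (v k))).re
    simp only [M_apply (hT j k)] at this
    exact this
  have e2 : (∑ j, ∑ k, inner ℂ (L (v j)) (L (M (fun x => G x j k) (v k)))).re =
      ∫ x, ∑ j, ∑ k, (conj (v j x) * (G x j k * v k x)).re := by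
    rw [integral_finsetSum _ (fun j _ => integrable_finsetSum _ fun k _ => hI j k), Complex.re_sum]
    refine Finset.sum_congr rfl fun j _ => ?_
    rw [integral_finsetSum _ (fun k _ => hI j k), Complex.re_sum]
    refine Finset.sum_congr rfl fun k _ => ?_
    rw [inner_L]
    have := integral_re (𝕜 := ℂ) (integrable_conj_mul (v j) (M (fun x => G x j k) (v k)))
    simp only [M_apply (hT j k)] at this ⊢
    exact this.symm
  rw [e1, e2]
  apply integral_mono
  · exact (integrable_finsetSum _ fun j _ => integrable_sq (v j)).const_mul _
  · exact (integrable_finsetSum _ fun j _ => integrable_finsetSum _ fun k _ => hI j k)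
  · intro x
    exact ellip_pt h x (fun j => v j x)

/-- `1 - Δ`. -/
def T : Sd d →ₗ[ℂ] Sd d := LinearMap.id - ∑ l, (D l) ∘ₗ (D l)

lemma T_def (g : Sd d) : T g = g - ∑ l, D l (D l g) := by
  simp [T, LinearMap.sum_apply]

lemma inner_T (g h : Sd d) :
    inner ℂ (L (T g)) (L h) = inner ℂ (L g) (L h) + ∑ l, inner ℂ (L (D l g)) (L (D l h)) := by
  rw [T_def, map_sub, inner_sub_left, map_sum, sum_inner, sub_eq_add_neg, ← Finset.sum_neg_distrib]
  congr 1
  refine Finset.sum_congr rfl fun l _ => ?_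
  rw [ibp]

lemma fourier_D (j : Fin d) (g : Sd d) (ξ : Ed d) :
    (𝓕 (D j g) : Sd d) ξ = (2 * π * Complex.I) * (ξ j * (𝓕 g : Sd d) ξ) := by
  have h := SchwartzMap.fourier_lineDerivOp_eq g (EuclideanSpace.single j (1:ℝ) : Ed d)
  change (𝓕 (LineDeriv.lineDerivOp (EuclideanSpace.single j (1:ℝ) : Ed d) g) : Sd d) ξ = _
  rw [h]
  rw [smul_apply, SchwartzMap.smulLeftCLM_apply_apply (by fun_prop)]
  simp [EuclideanSpace.inner_single_right]

lemma fourier_T (g : Sd d) (ξ : Ed d) :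
    (𝓕 (T g) : Sd d) ξ = ((1 + ‖(2 * π) • ξ‖ ^ 2 : ℝ) : ℂ) * (𝓕 g : Sd d) ξ := by
  have hF : ∀ f : Sd d, (𝓕 f : Sd d) = SchwartzMap.fourierTransformCLM ℂ f := fun f => rfl
  rw [T_def, hF, map_sub, map_sum]
  change (SchwartzMap.fourierTransformCLM ℂ g) ξ - (∑ l, SchwartzMap.fourierTransformCLM ℂ (D l (D l g))) ξ = _
  rw [sum_apply']
  simp_rw [← hF, fourier_D]
  rw [norm_smul, mul_pow, EuclideanSpace.norm_sq_eq]
  simp only [Real.norm_eq_abs, sq_abs]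
  push_cast
  rw [add_mul, one_mul, Finset.mul_sum, Finset.sum_mul, sub_eq_add_neg, ← Finset.sum_neg_distrib]
  congr 1
  refine Finset.sum_congr rfl fun l _ => ?_
  linear_combination -(4 * (π:ℂ)^2 * (ξ l)^2 * (𝓕 g : Sd d) ξ) * Complex.I_sq

lemma T_surj (ψ : Sd d) : ∃ g : Sd d, T g = ψ := by
  let w : Ed d → ℝ := fun ξ => (1 + ‖(2 * π) • ξ‖ ^ 2) ^ (-1 : ℝ)
  have hw : TG w := (Function.hasTemperateGrowth_one_add_norm_sq_rpow (Ed d) (-1)).comp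
    (ContinuousLinearMap.hasTemperateGrowth ((2 * π) • ContinuousLinearMap.id ℝ (Ed d)))
  refine ⟨𝓕⁻ (M w (𝓕 ψ)), ?_⟩
  have h : (𝓕 (T (𝓕⁻ (M w (𝓕 ψ)))) : Sd d) = 𝓕 ψ := by
    ext ξ
    rw [fourier_T, FourierTransform.fourier_fourierInv_eq, M_apply hw, ← mul_assoc, ← Complex.ofReal_mul]
    have : (1 + ‖(2 * π) • ξ‖ ^ 2) * w ξ = 1 := by
      simp only [w]
      rw [Real.rpow_neg_one]
      exact mul_inv_cancel₀ (by positivity)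
    rw [this]; simp
  have := congrArg (fun f : Sd d => (𝓕⁻ f : Sd d)) h
  simpa using this

end RC
end

section
open MeasureTheory Filter Topology Complex
open scoped Real ENNReal FourierTransform ComplexConjugate
namespace RC
variable {d : ℕ}

def N2 (g : Sd d) : ℝ := ‖L g‖ ^ 2 + ∑ k, ‖L (D k g)‖ ^ 2 + ∑ l, ∑ j, ‖L (D j (D l g))‖ ^ 2

lemma N2_nonneg (g : Sd d) : 0 ≤ N2 g := by unfold N2; positivity

lemma le_N2_0 (g : Sd d) : ‖L g‖ ≤ √(N2 g) := by
  apply Real.le_sqrt_of_sq_le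
  unfold N2
  have h1 : 0 ≤ ∑ k, ‖L (D k g)‖ ^ 2 := by positivity
  have h2 : 0 ≤ ∑ l, ∑ j, ‖L (D j (D l g))‖ ^ 2 :=
    Finset.sum_nonneg fun l _ => Finset.sum_nonneg fun j _ => sq_nonneg _
  linarith

lemma le_N2_1 (g : Sd d) (k : Fin d) : ‖L (D k g)‖ ≤ √(N2 g) := by
  apply Real.le_sqrt_of_sq_le
  unfold N2
  have h1 : ‖L (D k g)‖ ^ 2 ≤ ∑ k, ‖L (D k g)‖ ^ 2 :=
    Finset.single_le_sum (f := fun k => ‖L (D k g)‖ ^ 2) (fun _ _ => by positivity) (Finset.mem_univ k)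
  have h2 : 0 ≤ ∑ l, ∑ j, ‖L (D j (D l g))‖ ^ 2 :=
    Finset.sum_nonneg fun l _ => Finset.sum_nonneg fun j _ => sq_nonneg _
  have := sq_nonneg ‖L g‖
  linarith

lemma le_N2_2 (g : Sd d) (j l : Fin d) : ‖L (D j (D l g))‖ ≤ √(N2 g) := by
  apply Real.le_sqrt_of_sq_le
  unfold N2
  have h1 : 0 ≤ ∑ k, ‖L (D k g)‖ ^ 2 := by positivity
  have h2 : ‖L (D j (D l g))‖ ^ 2 ≤ ∑ j, ‖L (D j (D l g))‖ ^ 2 :=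
    Finset.single_le_sum (f := fun j => ‖L (D j (D l g))‖ ^ 2) (fun _ _ => by positivity) (Finset.mem_univ j)
  have h3 : ∑ j, ‖L (D j (D l g))‖ ^ 2 ≤ ∑ l, ∑ j, ‖L (D j (D l g))‖ ^ 2 :=
    Finset.single_le_sum (f := fun l => ∑ j, ‖L (D j (D l g))‖ ^ 2) (fun _ _ => by positivity) (Finset.mem_univ l)
  have := sq_nonneg ‖L g‖
  linarith

lemma norm_T_le (g : Sd d) : ‖L (T g)‖ ≤ (1 + d) * √(N2 g) := by
  rw [T_def, map_sub, map_sum]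
  calc _ ≤ ‖L g‖ + ∑ l, ‖L (D l (D l g))‖ :=
        (norm_sub_le _ _).trans (add_le_add le_rfl (norm_sum_le _ _))
    _ ≤ √(N2 g) + ∑ l : Fin d, √(N2 g) :=
        add_le_add (le_N2_0 g) (Finset.sum_le_sum fun l _ => le_N2_2 g l l)
    _ = _ := by simp; ring

variable {G : Ed d → Fin d → Fin d → ℝ}

lemma norm_P_le (hT : ∀ j k, TG fun x => G x j k) {K : ℝ}
    (hK : ∀ j k x, |G x j k| ≤ K) (hK' : ∀ l j k x, |dd l (fun x => G x j k) x| ≤ K) (g : Sd d) :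
    ‖L (Pop G g)‖ ≤ (d * (d * (K * 2))) * √(N2 g) := by
  rw [Pop_def, map_neg, norm_neg, map_sum]
  calc _ ≤ ∑ j : Fin d, ∑ k : Fin d, (K * 2 * √(N2 g)) := by
        refine (norm_sum_le _ _).trans (Finset.sum_le_sum fun j _ => ?_)
        rw [map_sum]
        refine (norm_sum_le _ _).trans (Finset.sum_le_sum fun k _ => ?_)
        have hK0 : 0 ≤ K := (abs_nonneg _).trans (hK j k 0)
        rw [D_M (hT j k), map_add]
        refine (norm_add_le _ _).trans ?_
        have h1 := norm_M_le (hT j k) (hK j k) (D j (D k g))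
        have h2 := norm_M_le ((hT j k).dd j) (hK' j j k) (D k g)
        have h3 := mul_le_mul_of_nonneg_left (le_N2_2 g j k) hK0
        have h4 := mul_le_mul_of_nonneg_left (le_N2_1 g k) hK0
        linarith
    _ = _ := by simp; ring

lemma D_P (hT : ∀ j k, TG fun x => G x j k) (l : Fin d) (g : Sd d) :
    D l (Pop G g) = Pop G (D l g) - ∑ j, ∑ k, D j (M (dd l fun x => G x j k) (D k g)) := by
  simp only [Pop_def, map_neg, map_sum]
  rw [← neg_add', ← Finset.sum_add_distrib]
  congr 1
  refine Finset.sum_congr rfl fun j _ => ?_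
  rw [← Finset.sum_add_distrib]
  refine Finset.sum_congr rfl fun k _ => ?_
  rw [D_comm, D_M (hT j k), map_add, D_comm l k]

lemma energy (hT : ∀ j k, TG fun x => G x j k) {lam : ℝ}
    (h : ∀ (x : Ed d) (v : Fin d → ℝ),
      lam * ∑ j, v j ^ 2 ≤ (∑ j, ∑ k, G x j k * v j * v k)) (g : Sd d) :
    lam * ∑ j, ‖L (D j g)‖ ^ 2 ≤ (inner ℂ (L g) (L (Pop G g))).re := by
  rw [inner_P]
  exact ellip hT h fun j => D j g

lemma coer1 (hT : ∀ j k, TG fun x => G x j k) {lam : ℝ} (hlam : 0 < lam)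
    (h : ∀ (x : Ed d) (v : Fin d → ℝ),
      lam * ∑ j, v j ^ 2 ≤ (∑ j, ∑ k, G x j k * v j * v k)) {K : ℝ}
    (hK' : ∀ l j k x, |dd l (fun x => G x j k) x| ≤ K) (l : Fin d) (g : Sd d) :
    lam / 2 * ∑ j, ‖L (D j (D l g))‖ ^ 2 - d ^ 2 * K ^ 2 / (2 * lam) * ∑ k, ‖L (D k g)‖ ^ 2 ≤
      (inner ℂ (L (D l g)) (L (D l (Pop G g)))).re := by
  have hd : 0 < (d : ℝ) := by exact_mod_cast l.pos
  rw [D_P hT, map_sub, inner_sub_right, Complex.sub_re]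
  have h1 := energy hT h (D l g)
  have h2 : (inner ℂ (L (D l g)) (L (∑ j, ∑ k, D j (M (dd l fun x => G x j k) (D k g))))).re ≤
      ∑ j, ∑ k, ((lam / (2 * d)) * ‖L (D j (D l g))‖ ^ 2 + d * K ^ 2 / (2 * lam) * ‖L (D k g)‖ ^ 2) := by
    simp only [map_sum, inner_sum, Complex.re_sum]
    refine Finset.sum_le_sum fun j _ => Finset.sum_le_sum fun k _ => ?_
    have hK0 : 0 ≤ K := (abs_nonneg _).trans (hK' j j k 0)
    rw [ibp]
    refine (Complex.re_le_norm _).trans ?_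
    rw [norm_neg]
    refine (norm_inner_le_norm _ _).trans ?_
    have h2 := norm_M_le ((hT j k).dd l) (hK' l j k) (D k g)
    refine (mul_le_mul_of_nonneg_left h2 (norm_nonneg _)).trans ?_
    generalize ‖L (D j (D l g))‖ = a
    generalize ‖L (D k g)‖ = b
    have e : lam / (2 * d) * a ^ 2 + d * K ^ 2 / (2 * lam) * b ^ 2 - a * (K * b)
        = (lam * a - d * K * b) ^ 2 / (2 * d * lam) := by field_simp; ring
    have : 0 ≤ (lam * a - d * K * b) ^ 2 / (2 * d * lam) := by positivity
    linarith
  have e : ∑ j, ∑ k, ((lam / (2 * d)) * ‖L (D j (D l g))‖ ^ 2 + d * K ^ 2 / (2 * lam) * ‖L (D k g)‖ ^ 2)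
     = lam / 2 * ∑ j, ‖L (D j (D l g))‖ ^ 2 + d ^ 2 * K ^ 2 / (2 * lam) * ∑ k, ‖L (D k g)‖ ^ 2 := by
    simp only [Finset.sum_add_distrib, Finset.sum_const, Finset.card_univ, Fintype.card_fin, nsmul_eq_mul,
      ← Finset.mul_sum]
    field_simp
  linarith

lemma coer2 (hT : ∀ j k, TG fun x => G x j k) {lam : ℝ} (hlam : 0 < lam)
    (h : ∀ (x : Ed d) (v : Fin d → ℝ),
      lam * ∑ j, v j ^ 2 ≤ (∑ j, ∑ k, G x j k * v j * v k)) {K : ℝ}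
    (hK' : ∀ l j k x, |dd l (fun x => G x j k) x| ≤ K) {κ : ℝ}
    (hκ : κ = 1 + d * (d ^ 2 * K ^ 2 / (2 * lam))) (g : Sd d) :
    min 1 (lam / 2) * N2 g ≤ (inner ℂ (L (T g)) (L (Pop G g + (κ : ℂ) • g))).re := by
  have hκ1 : 1 ≤ κ := by rw [hκ]; have : 0 ≤ d * (d ^ 2 * K ^ 2 / (2 * lam)) := by positivity
                         linarith
  rw [map_add, inner_add_right, map_smul, inner_smul_right, inner_T, inner_T]
  simp only [Complex.add_re, Complex.re_ofReal_mul, Complex.re_sum, inner_self_eq_norm_sq_to_K]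
  have hre : ∀ f : Sd d, (((‖L f‖ : ℝ) : ℂ) ^ 2).re = ‖L f‖ ^ 2 := fun f => by
    rw [← Complex.ofReal_pow, Complex.ofReal_re]
  simp only [Complex.coe_algebraMap, hre]
  have h0 := energy hT h g
  have h1 := Finset.sum_le_sum fun l (_ : l ∈ Finset.univ) => coer1 hT hlam h hK' l g
  rw [Finset.sum_sub_distrib, Finset.sum_const, Finset.card_univ, Fintype.card_fin, nsmul_eq_mul,
    ← Finset.mul_sum] at h1
  unfold N2
  generalize hA1 : ∑ k, ‖L (D k g)‖ ^ 2 = A1 at *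
  generalize hA2 : ∑ l, ∑ j, ‖L (D j (D l g))‖ ^ 2 = A2 at *
  have hA1' : 0 ≤ A1 := by rw [← hA1]; exact Finset.sum_nonneg fun l _ => sq_nonneg _
  have hA2' : 0 ≤ A2 := by rw [← hA2]; exact Finset.sum_nonneg fun l _ => Finset.sum_nonneg fun j _ => sq_nonneg _
  have hA0 := sq_nonneg ‖L g‖
  have m1 := mul_le_mul_of_nonneg_right (min_le_left 1 (lam / 2)) (add_nonneg hA0 hA1')
  have m2 := mul_le_mul_of_nonneg_right (min_le_right 1 (lam / 2)) hA2'
  have m3 := mul_le_mul_of_nonneg_right hκ1 hA0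
  have m4 : κ * A1 = A1 + d * (d ^ 2 * K ^ 2 / (2 * lam) * A1) := by rw [hκ]; ring
  have m5 : 0 ≤ lam * A1 := by positivity
  rw [mul_add]
  linarith

theorem exists_dense (hG : Standing d G) : ∃ κ : ℝ, 0 < κ ∧
    DenseRange fun g : Sd d => L (Pop G g + (κ : ℂ) • g) := by
  obtain ⟨hC, -, lam, Lam, hlam, hE⟩ := hG
  have hT : ∀ j k, TG fun x => G x j k := fun j k => CbSmooth.tg (hC j k)
  have h := fun x v => (hE x v).1
  choose K1 hK1 using fun j k => CbSmooth.bdd (hC j k)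
  choose K2 hK2 using fun l j k => CbSmooth.dd_bdd (hC j k) l
  obtain ⟨K, hK, hK'⟩ : ∃ K, (∀ j k x, |G x j k| ≤ K) ∧
      (∀ l j k x, |dd l (fun x => G x j k) x| ≤ K) := by
    refine ⟨(∑ j, ∑ k, |K1 j k|) + ∑ l, ∑ j, ∑ k, |K2 l j k|, fun j k x => ?_, fun l j k x => ?_⟩
    · have a1 : |K1 j k| ≤ ∑ k, |K1 j k| :=
        Finset.single_le_sum (f := fun k => |K1 j k|) (fun _ _ => by positivity) (Finset.mem_univ k)
      have a2 : ∑ k, |K1 j k| ≤ ∑ j, ∑ k, |K1 j k| :=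
        Finset.single_le_sum (f := fun j => ∑ k, |K1 j k|) (fun _ _ => by positivity) (Finset.mem_univ j)
      have a3 : 0 ≤ ∑ l, ∑ j, ∑ k, |K2 l j k| := by positivity
      have := hK1 j k x
      have := le_abs_self (K1 j k)
      linarith
    · have a1 : |K2 l j k| ≤ ∑ k, |K2 l j k| :=
        Finset.single_le_sum (f := fun k => |K2 l j k|) (fun _ _ => by positivity) (Finset.mem_univ k)
      have a2 : ∑ k, |K2 l j k| ≤ ∑ j, ∑ k, |K2 l j k| :=
        Finset.single_le_sum (f := fun j => ∑ k, |K2 l j k|) (fun _ _ => by positivity) (Finset.mem_univ j)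
      have a4 : ∑ j, ∑ k, |K2 l j k| ≤ ∑ l, ∑ j, ∑ k, |K2 l j k| :=
        Finset.single_le_sum (f := fun l => ∑ j, ∑ k, |K2 l j k|) (fun _ _ => by positivity) (Finset.mem_univ l)
      have a3 : 0 ≤ ∑ j, ∑ k, |K1 j k| := by positivity
      have := hK2 l j k x
      have := le_abs_self (K2 l j k)
      linarith
  obtain ⟨κ, hκ⟩ : ∃ κ : ℝ, κ = 1 + d * (d ^ 2 * K ^ 2 / (2 * lam)) := ⟨_, rfl⟩
  have hκ0 : 0 < κ := by rw [hκ]; positivity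
  refine ⟨κ, hκ0, ?_⟩
  let A : Sd d →ₗ[ℂ] L2 d := L ∘ₗ (Pop G + (κ : ℂ) • LinearMap.id)
  have hA : ∀ g, A g = L (Pop G g + (κ : ℂ) • g) := fun g => rfl
  suffices hs : A.range.topologicalClosure = ⊤ by
    have := (Submodule.dense_iff_topologicalClosure_eq_top).2 hs
    rw [DenseRange]
    convert this using 1
    ext y; simp only [Set.mem_range, LinearMap.coe_range, hA]
  rw [Submodule.topologicalClosure_eq_top_iff, Submodule.eq_bot_iff]
  intro u hu
  have hu' : ∀ g, inner ℂ u (A g) = 0 := fun g =>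
    (Submodule.mem_orthogonal' _ _).1 hu _ ⟨g, rfl⟩
  set c := min 1 (lam / 2) with hc
  have hc0 : 0 < c := lt_min one_pos (by positivity)
  obtain ⟨C, hC0, hCb⟩ : ∃ C, 0 ≤ C ∧ ∀ g, ‖A g‖ ≤ C * √(N2 g) := by
    refine ⟨|d * (d * (K * 2))| + κ, by positivity, fun g => ?_⟩
    rw [hA, map_add, map_smul]
    refine (norm_add_le _ _).trans ?_
    rw [norm_smul, Complex.norm_real, Real.norm_of_nonneg hκ0.le, add_mul _ κ]
    refine add_le_add ((norm_P_le hT hK hK' g).trans ?_) (mul_le_mul_of_nonneg_left (le_N2_0 g) hκ0.le)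
    exact mul_le_mul_of_nonneg_right (le_abs_self _) (Real.sqrt_nonneg _)
  -- key bound
  have key : ∀ ψ : Sd d, ‖L ψ‖ ≤ (1 + d) * (C / c) * ‖L ψ - u‖ := by
    intro ψ
    obtain ⟨g, rfl⟩ := T_surj ψ
    have h1 := coer2 hT hlam h hK' hκ g
    rw [← hA, ← hc] at h1
    have h2 : inner ℂ (L (T g)) (A g) = inner ℂ (L (T g) - u) (A g) := by
      rw [inner_sub_left, hu', sub_zero]
    rw [h2] at h1
    have h3 := h1.trans ((Complex.re_le_norm _).trans (norm_inner_le_norm _ _))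
    have h4 := h3.trans (mul_le_mul_of_nonneg_left (hCb g) (norm_nonneg _))
    have hN := Real.sq_sqrt (N2_nonneg g)
    have hn := norm_T_le g
    set n := √(N2 g) with hn'
    have hn0 : 0 ≤ n := Real.sqrt_nonneg _
    rw [← hN] at h4
    have h5 : n ≤ C / c * ‖L (T g) - u‖ := by
      rcases hn0.eq_or_lt with h0 | h0
      · rw [← h0]; positivity
      · rw [div_mul_eq_mul_div, le_div_iff₀ hc0]
        have : (n * c) * n ≤ (C * ‖L (T g) - u‖) * n := by nlinarith
        exact le_of_mul_le_mul_right this h0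
    calc _ ≤ _ := hn
      _ ≤ (1 + d) * (C / c * ‖L (T g) - u‖) := by gcongr
      _ = _ := by ring
  have hcl : ∀ f : L2 d, ‖f‖ ≤ (1 + d) * (C / c) * ‖f - u‖ := by
    intro f
    refine L_dense.induction_on (p := fun f : L2 d => ‖f‖ ≤ (1 + d) * (C / c) * ‖f - u‖) f ?_ key
    exact isClosed_le (by fun_prop) (by fun_prop)
  have := hcl u
  simpa using this

end RC
end

section
open MeasureTheory Filter Topology Complex
open scoped Real ENNReal FourierTransform ComplexConjugate
namespace RC
variable {d : ℕ} {G : Ed d → Fin d → Fin d → ℝ}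

lemma Pop_cj (hT : ∀ j k, TG fun x => G x j k) (g : Sd d) : Pop G (cj g) = cj (Pop G g) := by
  ext x
  simp only [Pop_def, D_cj, M_cj (hT _ _), cj_apply, neg_apply, sum_apply', map_neg, map_sum]

lemma integral_mul_eq_inner (f : L2 d) (φ : Sd d) : ∫ x, f x * φ x = inner ℂ (L (cj φ)) f := by
  rw [inner_L_left]; simp

lemma resW (S : SpectralCalc d G) (hT : ∀ j k, TG fun x => G x j k) {z : ℂ} (hz : z.im ≠ 0)
    (f : L2 d) (g : Sd d) :
    inner ℂ (L (Pop G g)) (S.map (fun s => ((s : ℂ) - z)⁻¹) f) -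
      z * inner ℂ (L g) (S.map (fun s => ((s : ℂ) - z)⁻¹) f) = inner ℂ (L g) f := by
  have := S.map_resolvent z hz f (cj g)
  rw [← Pop_coe hT] at this
  rw [integral_mul_eq_inner, integral_mul_eq_inner, integral_mul_eq_inner, Pop_cj hT] at this
  simpa only [cj_cj] using this

lemma ker_triv' (S : SpectralCalc d G) (hT : ∀ j k, TG fun x => G x j k) (f : L2 d)
    (h : ∀ g : Sd d, inner ℂ (L (Pop G g)) f = 0) : f = 0 := by
  apply S.ker_triv
  intro φ
  rw [← Pop_coe hT, integral_mul_eq_inner, ← Pop_cj hT]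
  exact h _

lemma sub_ne {z : ℂ} (hz : z.im ≠ 0) (s : ℝ) : (s : ℂ) - z ≠ 0 := by
  intro h
  apply hz
  have := congrArg Complex.im h
  simpa using this

lemma good_res {z : ℂ} (hz : z.im ≠ 0) : GoodSymbol fun s : ℝ => ((s : ℂ) - z)⁻¹ := by
  refine ⟨?_, |z.im|⁻¹, fun s _ => ?_⟩
  · exact Continuous.inv₀ (by fun_prop) (sub_ne hz)
  · rw [norm_inv]
    apply inv_anti₀ (by positivity)
    have := Complex.abs_im_le_norm ((s : ℂ) - z)
    simpa using this

lemma good_const (c : ℂ) : GoodSymbol fun _ => c := ⟨continuous_const, ‖c‖, fun _ _ => le_rfl⟩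

lemma good_add {φ ψ : ℝ → ℂ} (h1 : GoodSymbol φ) (h2 : GoodSymbol ψ) :
    GoodSymbol fun s => φ s + ψ s := by
  obtain ⟨a, C, hC⟩ := h1
  obtain ⟨b, C', hC'⟩ := h2
  exact ⟨a.add b, C + C', fun s hs => (norm_add_le _ _).trans (add_le_add (hC s hs) (hC' s hs))⟩

lemma good_mul {φ ψ : ℝ → ℂ} (h1 : GoodSymbol φ) (h2 : GoodSymbol ψ) :
    GoodSymbol fun s => φ s * ψ s := by
  obtain ⟨a, C, hC⟩ := h1
  obtain ⟨b, C', hC'⟩ := h2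
  refine ⟨a.mul b, C * C', fun s hs => ?_⟩
  rw [norm_mul]
  exact mul_le_mul (hC s hs) (hC' s hs) (norm_nonneg _) ((norm_nonneg _).trans (hC s hs))

lemma good_smul {φ : ℝ → ℂ} (c : ℂ) (h1 : GoodSymbol φ) :
    GoodSymbol fun s => c * φ s := good_mul (good_const c) h1

lemma map_res_star (S : SpectralCalc d G) {z : ℂ} (hz : z.im ≠ 0) :
    S.map (fun s => ((s : ℂ) - z)⁻¹) =
      ContinuousLinearMap.adjoint (S.map (fun s => ((s : ℂ) - conj z)⁻¹)) := by
  have hz' : (conj z).im ≠ 0 := by simpa using hz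
  rw [S.map_star _ (good_res hz')]
  congr 1
  ext s
  rw [map_inv₀, map_sub, Complex.conj_conj, Complex.conj_ofReal]

lemma res_apply (S : SpectralCalc d G) (hT : ∀ j k, TG fun x => G x j k) {z : ℂ} (hz : z.im ≠ 0)
    (g : Sd d) : S.map (fun s => ((s : ℂ) - z)⁻¹) (L (Pop G g - z • g)) = L g := by
  have hz' : (conj z).im ≠ 0 := by simpa using hz
  rw [map_res_star S hz]
  refine ext_inner_right ℂ fun f => ?_
  have h := resW S hT hz' f g
  rw [ContinuousLinearMap.adjoint_inner_left, ← h, map_sub L, inner_sub_left, map_smul L,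
    inner_smul_left]

lemma map_one (S : SpectralCalc d G) (hT : ∀ j k, TG fun x => G x j k) (f : L2 d) :
    S.map (fun _ => 1) f = f := by
  refine L_dense.induction_on (p := fun f : L2 d => S.map (fun _ => 1) f = f) f ?_ ?_
  · exact isClosed_eq (by fun_prop) (by fun_prop)
  · intro g
    have hz : (I : ℂ).im ≠ 0 := by simp
    have := S.map_mul (fun _ => 1) _ (good_const 1) (good_res hz)
    simp only [one_mul] at this
    have h2 := congrArg (fun A => A (L (Pop G g - I • g))) this
    simp only [ContinuousLinearMap.comp_apply] at h2
    rw [res_apply S hT hz] at h2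
    exact h2.symm

lemma pos_ne {κ : ℝ} (hκ : 0 < κ) (s : ℝ) : ((max s 0 + κ : ℝ) : ℂ) ≠ 0 := by
  have : 0 < max s 0 + κ := by positivity
  exact_mod_cast this.ne'

def rk (κ : ℝ) : ℝ → ℂ := fun s => ((max s 0 + κ : ℝ) : ℂ)⁻¹

lemma rk_norm {κ : ℝ} (hκ : 0 < κ) (s : ℝ) : ‖rk κ s‖ ≤ κ⁻¹ := by
  unfold rk
  rw [norm_inv, Complex.norm_real, Real.norm_of_nonneg (by positivity)]
  apply inv_anti₀ hκ
  have := le_max_right s 0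
  linarith

lemma good_rk {κ : ℝ} (hκ : 0 < κ) : GoodSymbol (rk κ) := by
  refine ⟨?_, κ⁻¹, fun s _ => rk_norm hκ s⟩
  exact Continuous.inv₀ (by fun_prop) (pos_ne hκ)

lemma rk_apply (S : SpectralCalc d G) (hT : ∀ j k, TG fun x => G x j k) {κ : ℝ} (hκ : 0 < κ)
    (g : Sd d) : S.map (rk κ) (L (Pop G g + (κ : ℂ) • g)) = L g := by
  have hz : (I : ℂ).im ≠ 0 := by simp
  let m : ℝ → ℂ := fun s => 1 + (-(κ + I)) * rk κ s
  have hm : GoodSymbol m := good_add (good_const 1) (good_smul _ (good_rk hκ))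
  have hm2 : S.map m = S.map (fun _ => 1) + (-(κ + I) : ℂ) • S.map (rk κ) := by
    rw [← S.map_smul _ _ (good_rk hκ)]
    exact S.map_add _ _ (good_const 1) (good_smul _ (good_rk hκ))
  have h1 : S.map (rk κ) = (S.map m).comp (S.map fun s => ((s : ℂ) - I)⁻¹) := by
    rw [← S.map_mul _ _ hm (good_res hz)]
    refine S.map_congr _ _ (good_rk hκ) (good_mul hm (good_res hz)) fun s hs => ?_
    simp only [m, rk]
    have h1 := pos_ne hκ s
    have h2 := sub_ne hz s
    rw [max_eq_left hs] at h1 ⊢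
    push_cast at h1 ⊢
    field_simp
    ring
  have h2 : S.map (rk κ) (L (Pop G g - I • g)) = L g + (-(κ + I) : ℂ) • S.map (rk κ) (L g) := by
    conv_lhs => rw [h1]
    rw [ContinuousLinearMap.comp_apply, res_apply S hT hz, hm2, add_apply,
      map_one S hT, smul_apply]
  have e : Pop G g + (κ : ℂ) • g = (Pop G g - I • g) + ((κ + I : ℂ)) • g := by
    rw [add_smul]; abel
  rw [e, map_add, map_add, h2, map_smul, map_smul, neg_smul]
  abel

lemma core_bound (S : SpectralCalc d G) (hT : ∀ j k, TG fun x => G x j k) {lam : ℝ} (hlam : 0 < lam)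
    (h : ∀ (x : Ed d) (v : Fin d → ℝ),
      lam * ∑ j, v j ^ 2 ≤ (∑ j, ∑ k, G x j k * v j * v k)) {κ : ℝ} (hκ : 0 < κ) (k : Fin d)
    (g : Sd d) : ‖L (D k g)‖ ≤ √((lam * κ)⁻¹) * ‖L (Pop G g + (κ : ℂ) • g)‖ := by
  have h1 := energy hT h g
  have h2 : ‖L (D k g)‖ ^ 2 ≤ ∑ k, ‖L (D k g)‖ ^ 2 :=
    Finset.single_le_sum (f := fun k => ‖L (D k g)‖ ^ 2) (fun _ _ => by positivity) (Finset.mem_univ k)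
  have h3 : (inner ℂ (L g) (L (Pop G g))).re ≤ (inner ℂ (L g) (L (Pop G g + (κ : ℂ) • g))).re := by
    rw [map_add, map_smul, inner_add_right, inner_smul_right, Complex.add_re, Complex.re_ofReal_mul,
      inner_self_eq_norm_sq_to_K]
    have : (((‖L g‖ : ℝ) : ℂ) ^ 2).re = ‖L g‖ ^ 2 := by
      rw [← Complex.ofReal_pow, Complex.ofReal_re]
    simp only [Complex.coe_algebraMap, this]
    have : 0 ≤ κ * ‖L g‖ ^ 2 := by positivity
    linarith
  have h4 := (Complex.re_le_norm _).trans (norm_inner_le_norm (𝕜 := ℂ) (L g) (L (Pop G g + (κ : ℂ) • g)))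
  have h5 : ‖L g‖ ≤ κ⁻¹ * ‖L (Pop G g + (κ : ℂ) • g)‖ := by
    conv_lhs => rw [← rk_apply S hT hκ g]
    exact (ContinuousLinearMap.le_opNorm _ _).trans
      (mul_le_mul_of_nonneg_right (S.map_norm _ _ fun s _ => rk_norm hκ s) (norm_nonneg _))
  generalize ‖L (Pop G g + (κ : ℂ) • g)‖ = a at *
  have ha : 0 ≤ a := by
    by_contra hc
    have : κ⁻¹ * a < 0 := mul_neg_of_pos_of_neg (by positivity) (by linarith)
    linarith [norm_nonneg (L g)]
  have h6 : lam * ‖L (D k g)‖ ^ 2 ≤ κ⁻¹ * a ^ 2 := by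
    have := mul_le_mul_of_nonneg_left h2 hlam.le
    have := mul_le_mul_of_nonneg_right h5 ha
    linarith
  refine (sq_le_sq₀ (norm_nonneg _) (by positivity)).1 ?_
  rw [mul_pow, Real.sq_sqrt (by positivity), mul_inv, mul_assoc, inv_mul_eq_div, le_div_iff₀ hlam]
  linarith

lemma core (S : SpectralCalc d G) (hT : ∀ j k, TG fun x => G x j k) {lam : ℝ} (hlam : 0 < lam)
    (h : ∀ (x : Ed d) (v : Fin d → ℝ),
      lam * ∑ j, v j ^ 2 ≤ (∑ j, ∑ k, G x j k * v j * v k)) {κ : ℝ} (hκ : 0 < κ)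
    (hD : DenseRange fun g : Sd d => L (Pop G g + (κ : ℂ) • g)) (f : L2 d) :
    ∃ φ : ℕ → Sd d, Tendsto (fun n => L (Pop G (φ n) + (κ : ℂ) • φ n)) atTop (𝓝 f) ∧
      Tendsto (fun n => L (φ n)) atTop (𝓝 (S.map (rk κ) f)) ∧
      ∀ k, ∃ w : L2 d, Tendsto (fun n => L (D k (φ n))) atTop (𝓝 w) ∧
        ∀ ψ : Sd d, ∫ x, w x * ψ x = -∫ x, (S.map (rk κ) f) x * pd d k ψ x := by
  have hf : f ∈ closure (Set.range fun g : Sd d => L (Pop G g + (κ : ℂ) • g)) := hD f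
  obtain ⟨y, hy, hlim⟩ := mem_closure_iff_seq_limit.1 hf
  choose φ hφ using hy
  have hlim1 : Tendsto (fun n => L (Pop G (φ n) + (κ : ℂ) • φ n)) atTop (𝓝 f) := by
    have : (fun n => L (Pop G (φ n) + (κ : ℂ) • φ n)) = y := funext hφ
    rw [this]; exact hlim
  have hlim2 : Tendsto (fun n => L (φ n)) atTop (𝓝 (S.map (rk κ) f)) := by
    have := ((S.map (rk κ)).continuous.tendsto f).comp hlim1
    refine this.congr fun n => ?_
    exact rk_apply S hT hκ (φ n)
  refine ⟨φ, hlim1, hlim2, fun k => ?_⟩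
  have hc : CauchySeq fun n => L (D k (φ n)) := by
    have h1 := hlim1.cauchySeq
    rw [Metric.cauchySeq_iff] at h1 ⊢
    intro ε hε
    set c := √((lam * κ)⁻¹) with hcdef
    have hc0 : 0 ≤ c := Real.sqrt_nonneg _
    obtain ⟨N, hN⟩ := h1 (ε / (c + 1)) (by positivity)
    refine ⟨N, fun m hm n hn => ?_⟩
    have h2 := hN m hm n hn
    rw [dist_eq_norm, ← map_sub] at h2 ⊢
    rw [← map_sub]
    have h3 := core_bound S hT hlam h hκ k (φ m - φ n)
    have e : Pop G (φ m - φ n) + (κ : ℂ) • (φ m - φ n) =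
        Pop G (φ m) + (κ : ℂ) • (φ m) - (Pop G (φ n) + (κ : ℂ) • (φ n)) := by
      rw [map_sub, smul_sub]; abel
    rw [e] at h3
    rw [lt_div_iff₀ (by positivity)] at h2
    refine h3.trans_lt (lt_of_le_of_lt ?_ h2)
    rw [← hcdef]
    have ha := norm_nonneg (L (Pop G (φ m) + (κ : ℂ) • (φ m) - (Pop G (φ n) + (κ : ℂ) • (φ n))))
    generalize ‖L (Pop G (φ m) + (κ : ℂ) • (φ m) - (Pop G (φ n) + (κ : ℂ) • (φ n)))‖ = a at *
    nlinarith
  obtain ⟨w, hw⟩ := cauchySeq_tendsto_of_complete hc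
  refine ⟨w, hw, fun ψ => ?_⟩
  rw [← D_eq_pd, integral_mul_eq_inner, integral_mul_eq_inner, ← D_cj]
  have t1 : Tendsto (fun n => inner ℂ (L (cj ψ)) (L (D k (φ n)))) atTop (𝓝 (inner ℂ (L (cj ψ)) w)) :=
    tendsto_const_nhds.inner hw
  have t2 : Tendsto (fun n => -inner ℂ (L (D k (cj ψ))) (L (φ n))) atTop
      (𝓝 (-inner ℂ (L (D k (cj ψ))) (S.map (rk κ) f))) :=
    (tendsto_const_nhds.inner hlim2).neg
  refine tendsto_nhds_unique t1 (t2.congr fun n => ?_)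
  rw [ibp]

end RC
end

section
open MeasureTheory Filter Topology Complex
open scoped Real ENNReal FourierTransform ComplexConjugate
namespace RC
variable {d : ℕ} {G : Ed d → Fin d → Fin d → ℝ}

/-- `s/(s-z)` written as `1 + z (s-z)⁻¹`. -/
def th (z : ℂ) : ℝ → ℂ := fun s => 1 + z * ((s : ℂ) - z)⁻¹

lemma good_th {z : ℂ} (hz : z.im ≠ 0) : GoodSymbol (th z) :=
  good_add (good_const 1) (good_smul _ (good_res hz))

lemma th_ker (S : SpectralCalc d G) (hT : ∀ j k, TG fun x => G x j k) {z : ℂ} (hz : z.im ≠ 0)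
    (h : L2 d) (hh : S.map (th z) h = 0) : h = 0 := by
  have h1 : S.map (th z) = S.map (fun _ => 1) + z • S.map (fun s => ((s : ℂ) - z)⁻¹) := by
    rw [← S.map_smul _ _ (good_res hz)]
    exact S.map_add _ _ (good_const 1) (good_smul _ (good_res hz))
  rw [h1, add_apply, smul_apply, map_one S hT] at hh
  have h2 : h = -(z • S.map (fun s => ((s : ℂ) - z)⁻¹) h) := eq_neg_of_add_eq_zero_left hh
  have h3 : S.map (fun s => ((s : ℂ) - z)⁻¹) h = 0 := by
    apply ker_triv' S hT
    intro g
    have h4 := resW S hT hz h g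
    have h5 : inner ℂ (L g) h = -(z * inner ℂ (L g) (S.map (fun s => ((s : ℂ) - z)⁻¹) h)) := by
      conv_lhs => rw [h2]
      rw [inner_neg_right, inner_smul_right]
    rw [h5] at h4
    linear_combination h4
  rw [h2, h3, smul_zero, neg_zero]

lemma th_dense (S : SpectralCalc d G) (hT : ∀ j k, TG fun x => G x j k) :
    DenseRange (S.map (th I)) := by
  have hz : (I : ℂ).im ≠ 0 := by simp
  have hz' : (conj I : ℂ).im ≠ 0 := by simp
  have e : ContinuousLinearMap.adjoint (S.map (th I)) = S.map (th (conj I)) := by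
    rw [S.map_star _ (good_th hz)]
    congr 1
    ext s
    simp only [th, map_add, map_mul, map_inv₀, map_sub, Complex.conj_ofReal, _root_.map_one]
  have : (S.map (th I)).range.topologicalClosure = ⊤ := by
    rw [Submodule.topologicalClosure_eq_top_iff, ContinuousLinearMap.orthogonal_range, e,
      Submodule.eq_bot_iff]
    intro h hh
    exact th_ker S hT hz' h hh
  have := (Submodule.dense_iff_topologicalClosure_eq_top).2 this
  exact this

lemma th_norm (s : ℝ) : ‖th I s‖ ≤ |s| := by
  have hz : (I : ℂ).im ≠ 0 := by simp
  have h1 := sub_ne hz s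
  have : th I s = s * ((s : ℂ) - I)⁻¹ := by
    unfold th; field_simp; ring
  rw [this, norm_mul, Complex.norm_real, Real.norm_eq_abs, norm_inv]
  have h2 : 1 ≤ ‖(s : ℂ) - I‖ := by
    have := Complex.abs_im_le_norm ((s : ℂ) - I)
    simpa using this
  exact mul_le_of_le_one_right (abs_nonneg _) (inv_le_one_of_one_le₀ h2)

lemma phi_bdd {φr : ℝ → ℝ} (hc : Continuous φr) (hφ2 : HasCompactSupport φr) :
    ∃ C M : ℝ, 0 < C ∧ 0 < M ∧ (∀ s, |φr s| ≤ C) ∧ ∀ s, M < |s| → φr s = 0 := by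
  obtain ⟨C, hC⟩ := hc.bounded_above_of_compact_support hφ2
  obtain ⟨M, hM⟩ := hφ2.isCompact.isBounded.exists_norm_le
  refine ⟨max C 1, max M 1, by positivity, by positivity, fun s => (hC s).trans (le_max_left _ _),
    fun s hs => ?_⟩
  by_contra h
  have := hM s (subset_tsupport _ h)
  rw [Real.norm_eq_abs] at this
  linarith [le_max_left M 1]

def pl (φr : ℝ → ℝ) (lam : ℝ) : ℝ → ℂ := fun l => ((φr (l / lam) : ℝ) : ℂ)

lemma good_pl {φr : ℝ → ℝ} (hc : Continuous φr) {C : ℝ} (hC : ∀ s, |φr s| ≤ C) (lam : ℝ) :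
    GoodSymbol (pl φr lam) := by
  refine ⟨?_, C, fun s _ => ?_⟩
  · unfold pl; fun_prop
  · unfold pl; rw [Complex.norm_real]; exact hC _

lemma norm_pl (S : SpectralCalc d G) {φr : ℝ → ℝ} {C : ℝ} (hC : ∀ s, |φr s| ≤ C) (lam : ℝ) :
    ‖S.map (pl φr lam)‖ ≤ C := by
  apply S.map_norm
  intro s _
  unfold pl; rw [Complex.norm_real]; exact hC _

lemma strong0 (S : SpectralCalc d G) (hT : ∀ j k, TG fun x => G x j k) {φr : ℝ → ℝ}
    (hc : Continuous φr) (hφ2 : HasCompactSupport φr) (g : L2 d) :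
    Tendsto (fun lam : ℝ => S.map (pl φr lam) g) (𝓝[>] (0:ℝ)) (𝓝 0) := by
  obtain ⟨C, M, hC0, hM0, hC, hM⟩ := phi_bdd hc hφ2
  rw [Metric.tendsto_nhds]
  intro ε hε
  obtain ⟨h, hh⟩ := (th_dense S hT).exists_dist_lt g (ε := ε / (2 * C)) (by positivity)
  have hI : (I : ℂ).im ≠ 0 := by simp
  have hb : ∀ lam : ℝ, 0 < lam → ‖S.map (pl φr lam) (S.map (th I) h)‖ ≤ C * (M * lam) * ‖h‖ := by
    intro lam hl
    rw [← ContinuousLinearMap.comp_apply, ← S.map_mul _ _ (good_pl hc hC lam) (good_th hI)]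
    refine (ContinuousLinearMap.le_opNorm _ _).trans (mul_le_mul_of_nonneg_right ?_ (norm_nonneg _))
    apply S.map_norm
    intro s hs
    rw [norm_mul]
    by_cases hs' : M < |s / lam|
    · simp only [pl, hM _ hs', Complex.ofReal_zero, norm_zero, zero_mul]; positivity
    · apply mul_le_mul _ _ (norm_nonneg _) hC0.le
      · unfold pl; rw [Complex.norm_real]; exact hC _
      · refine (th_norm s).trans ?_
        rw [abs_div, abs_of_pos hl, not_lt, div_le_iff₀ hl] at hs'
        exact hs'
  have ht : Tendsto (fun lam : ℝ => C * (M * lam) * ‖h‖) (𝓝[>] (0:ℝ)) (𝓝 0) := by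
    have : Tendsto (fun lam : ℝ => C * (M * lam) * ‖h‖) (𝓝 (0:ℝ)) (𝓝 (C * (M * 0) * ‖h‖)) :=
      (by fun_prop : Continuous fun lam : ℝ => C * (M * lam) * ‖h‖).tendsto 0
    simp only [mul_zero, zero_mul] at this
    exact this.mono_left nhdsWithin_le_nhds
  filter_upwards [ht.eventually (gt_mem_nhds (half_pos hε)), self_mem_nhdsWithin] with lam h1 h2
  rw [dist_zero_right]
  have e : S.map (pl φr lam) g = S.map (pl φr lam) (g - S.map (th I) h) +
      S.map (pl φr lam) (S.map (th I) h) := by rw [← map_add, sub_add_cancel]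
  rw [e]
  have h3 : ‖S.map (pl φr lam) (g - S.map (th I) h)‖ < ε / 2 := by
    refine ((ContinuousLinearMap.le_opNorm _ _).trans
      (mul_le_mul_of_nonneg_right (norm_pl S hC lam) (norm_nonneg _))).trans_lt ?_
    rw [dist_eq_norm, lt_div_iff₀ (by positivity)] at hh
    linarith
  have h4 := hb lam h2
  calc _ ≤ _ := norm_add_le _ _
    _ < ε / 2 + ε / 2 := by linarith
    _ = ε := by ring

lemma weak0 (S : SpectralCalc d G) (hT : ∀ j k, TG fun x => G x j k) {φr : ℝ → ℝ}
    (hc : Continuous φr) (hφ2 : HasCompactSupport φr) (f : ℝ → L2 d) (hf : ∀ lam, ‖f lam‖ ≤ 1)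
    (h : L2 d) :
    Tendsto (fun lam : ℝ => inner ℂ h (S.map (pl φr lam) (f lam))) (𝓝[>] (0:ℝ)) (𝓝 0) := by
  obtain ⟨C, M, hC0, hM0, hC, hM⟩ := phi_bdd hc hφ2
  have h1 := strong0 S hT hc hφ2 h
  rw [tendsto_zero_iff_norm_tendsto_zero] at h1 ⊢
  refine squeeze_zero (fun _ => norm_nonneg _) (fun lam => ?_) h1
  have e : ContinuousLinearMap.adjoint (S.map (pl φr lam)) = S.map (pl φr lam) := by
    rw [S.map_star _ (good_pl hc hC lam)]
    congr 1
    ext s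
    simp only [pl, Complex.conj_ofReal]
  rw [← ContinuousLinearMap.adjoint_inner_left, e]
  refine (norm_inner_le_norm _ _).trans ?_
  exact mul_le_of_le_one_right (norm_nonneg _) (hf lam)

end RC
end

section
open MeasureTheory Filter Topology Complex
open scoped Real ENNReal FourierTransform ComplexConjugate
namespace RC
variable {d : ℕ} {G : Ed d → Fin d → Fin d → ℝ}

def et (t : ℝ) : ℝ → ℂ := fun lam => Complex.exp (-(t : ℂ) * ((max lam 0 : ℝ) : ℂ))

lemma norm_et (t s : ℝ) (hs : 0 ≤ s) : ‖et t s‖ = Real.exp (-t * s) := by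
  unfold et
  rw [max_eq_left hs, Complex.norm_exp]
  congr 1
  simp

lemma good_et {t : ℝ} (ht : 0 ≤ t) : GoodSymbol (et t) := by
  refine ⟨by unfold et; fun_prop, 1, fun s hs => ?_⟩
  rw [norm_et t s hs, Real.exp_le_one_iff]
  nlinarith

def ch (M : ℝ) : ℝ → ℝ := fun s => max 0 (min 1 (M + 1 - s))

lemma ch_nonneg (M s : ℝ) : 0 ≤ ch M s := le_max_left _ _
lemma ch_le (M s : ℝ) : ch M s ≤ 1 := max_le zero_le_one (min_le_left _ _)
lemma ch_one {M s : ℝ} (h : s ≤ M) : ch M s = 1 := by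
  unfold ch
  rw [min_eq_left (by linarith), max_eq_right zero_le_one]
lemma ch_zero {M s : ℝ} (h : M + 1 ≤ s) : ch M s = 0 := by
  unfold ch
  exact max_eq_left ((min_le_right _ _).trans (by linarith))
lemma ch_cont (M : ℝ) : Continuous (ch M) := by unfold ch; fun_prop

lemma s_ch {M s : ℝ} (hM : 0 < M) : max s 0 * ch M s ≤ M + 1 := by
  by_cases h : M + 1 ≤ s
  · rw [ch_zero h, mul_zero]; linarith
  · have h1 : max s 0 ≤ M + 1 := max_le (by linarith) (by linarith)
    have h2 := ch_le M s
    have h3 := ch_nonneg M s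
    nlinarith [le_max_right s 0]

/-- symbol `(s⁺+κ) χ`. -/
def qs (M κ : ℝ) : ℝ → ℂ := fun s => (((max s 0 + κ) * ch M s : ℝ) : ℂ)
def chC (M : ℝ) : ℝ → ℂ := fun s => ((ch M s : ℝ) : ℂ)
/-- symbol `s⁺ χ`. -/
def ps (M : ℝ) : ℝ → ℂ := fun s => ((max s 0 * ch M s : ℝ) : ℂ)

lemma good_chC (M : ℝ) : GoodSymbol (chC M) := by
  refine ⟨by have := ch_cont M; unfold chC; fun_prop, 1, fun s _ => ?_⟩
  unfold chC
  rw [Complex.norm_real, Real.norm_of_nonneg (ch_nonneg _ _)]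
  exact ch_le _ _

lemma good_ps {M : ℝ} (hM : 0 < M) : GoodSymbol (ps M) := by
  refine ⟨by have := ch_cont M; unfold ps; fun_prop, M + 1, fun s _ => ?_⟩
  unfold ps
  rw [Complex.norm_real, Real.norm_of_nonneg (mul_nonneg (le_max_right _ _) (ch_nonneg _ _))]
  exact s_ch hM

lemma qs_eq (M κ : ℝ) : qs M κ = fun s => ps M s + κ * chC M s := by
  ext s; simp only [qs, ps, chC]; push_cast; ring

lemma good_qs {M : ℝ} (hM : 0 < M) (κ : ℝ) : GoodSymbol (qs M κ) := by
  rw [qs_eq]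
  exact good_add (good_ps hM) (good_smul _ (good_chC M))

/-- Truncated integral. -/
def uN (S : SpectralCalc d G) (F : L2 d) (n : ℕ) : L2 d :=
  ∫ t in Set.Icc ((n : ℝ)⁻¹) (n : ℝ), ((Real.sqrt t)⁻¹ : ℝ) • (S.map (et t) F)

lemma clm_uN (S : SpectralCalc d G) (F : L2 d) (n : ℕ) (A : L2 d →L[ℂ] L2 d) :
    A (uN S F n) = 0 ∨ A (uN S F n) =
      ∫ t in Set.Icc ((n : ℝ)⁻¹) (n : ℝ), ((Real.sqrt t)⁻¹ : ℝ) • (A (S.map (et t) F)) := by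
  by_cases h : Integrable (fun t : ℝ => ((Real.sqrt t)⁻¹ : ℝ) • (S.map (et t) F))
      (volume.restrict (Set.Icc ((n : ℝ)⁻¹) (n : ℝ)))
  · right
    unfold uN
    rw [← ContinuousLinearMap.integral_comp_comm A h]
    congr 1
    ext t
    rw [ContinuousLinearMap.map_smul_of_tower]
  · left
    unfold uN
    rw [integral_undef h, map_zero]

lemma ch_uN (S : SpectralCalc d G) (F : L2 d) (n : ℕ) (A : L2 d →L[ℂ] L2 d)
    (hA : ∀ t, 0 ≤ t → A (S.map (et t) F) = S.map (et t) F) : A (uN S F n) = uN S F n := by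
  by_cases h : Integrable (fun t : ℝ => ((Real.sqrt t)⁻¹ : ℝ) • (S.map (et t) F))
      (volume.restrict (Set.Icc ((n : ℝ)⁻¹) (n : ℝ)))
  · unfold uN
    rw [← ContinuousLinearMap.integral_comp_comm A h]
    refine setIntegral_congr_fun measurableSet_Icc fun t ht => ?_
    have ht0 : 0 ≤ t := le_trans (by positivity) ht.1
    show A (((Real.sqrt t)⁻¹ : ℝ) • (S.map (et t) F)) = _
    rw [ContinuousLinearMap.map_smul_of_tower, hA t ht0]
  · unfold uN
    rw [integral_undef h, map_zero]

def hb (a : ℝ) (t : ℝ) : ℝ := if t ≤ 1 then a * t ^ (-(1/2) : ℝ) else t ^ (-(3/2) : ℝ)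

lemma hb_int (a : ℝ) : IntegrableOn (hb a) (Set.Ioi 0) := by
  rw [← Set.Ioc_union_Ioi_eq_Ioi (zero_le_one (α := ℝ))]
  refine IntegrableOn.union ?_ ?_
  · have h1 : IntegrableOn (fun t : ℝ => a * t ^ (-(1/2) : ℝ)) (Set.Ioc 0 1) := by
      have := (intervalIntegral.intervalIntegrable_rpow' (a := 0) (b := 1)
        (r := (-(1/2) : ℝ)) (by norm_num)).const_mul a
      rwa [intervalIntegrable_iff_integrableOn_Ioc_of_le zero_le_one] at this
    refine h1.congr_fun (fun t ht => ?_) measurableSet_Ioc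
    simp only [hb, if_pos ht.2]
  · have h1 : IntegrableOn (fun t : ℝ => t ^ (-(3/2) : ℝ)) (Set.Ioi 1) :=
      integrableOn_Ioi_rpow_of_lt (by norm_num) one_pos
    refine h1.congr_fun (fun t ht => ?_) measurableSet_Ioi
    have ht' : ¬ t ≤ 1 := not_le.2 (Set.mem_Ioi.1 ht)
    simp only [hb, if_neg ht']

lemma hb_nonneg {a : ℝ} (ha : 0 ≤ a) {t : ℝ} (ht : 0 < t) : 0 ≤ hb a t := by
  unfold hb; split_ifs <;> positivity

lemma hb_ge {a t b : ℝ} (ht : 0 < t) (h1 : b ≤ a) (h2 : b ≤ t⁻¹) : (√t)⁻¹ * b ≤ hb a t := by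
  have e : (√t)⁻¹ = t ^ (-(1/2) : ℝ) := by
    rw [Real.sqrt_eq_rpow, Real.rpow_neg ht.le]
  have hp : 0 ≤ (√t)⁻¹ := by positivity
  unfold hb
  split_ifs
  · rw [← e, mul_comm a]; exact mul_le_mul_of_nonneg_left h1 hp
  · have : t ^ (-(3/2) : ℝ) = (√t)⁻¹ * t⁻¹ := by
      rw [e, ← Real.rpow_neg_one t, ← Real.rpow_add ht]; norm_num
    rw [this]; exact mul_le_mul_of_nonneg_left h2 hp

lemma norm_ps_uN (S : SpectralCalc d G) {φr : ℝ → ℝ} (hc : Continuous φr) {C M : ℝ} (hC0 : 0 < C)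
    (hM0 : 0 < M) (hC : ∀ s, |φr s| ≤ C) (lam : ℝ) (f : L2 d) (hf : ‖f‖ ≤ 1) (n : ℕ) (hn : 1 ≤ n) :
    ‖S.map (ps M) (uN S (S.map (pl φr lam) f) n)‖ ≤ ∫ t in Set.Ioi (0:ℝ), C * hb (M + 1) t := by
  have hHint : IntegrableOn (fun t => C * hb (M + 1) t) (Set.Ioi 0) := (hb_int (M+1)).const_mul C
  have hHnn : 0 ≤ᵐ[volume.restrict (Set.Ioi (0:ℝ))] fun t => C * hb (M + 1) t :=
    ae_restrict_of_forall_mem measurableSet_Ioi fun t ht =>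
      mul_nonneg hC0.le (hb_nonneg (by linarith) ht)
  have hsub : Set.Icc ((n : ℝ)⁻¹) (n : ℝ) ⊆ Set.Ioi 0 := fun t ht => by
    have : (0:ℝ) < (n : ℝ)⁻¹ := by positivity
    exact lt_of_lt_of_le this ht.1
  rcases clm_uN S (S.map (pl φr lam) f) n (S.map (ps M)) with h | h
  · rw [h, norm_zero]; exact integral_nonneg_of_ae hHnn
  rw [h]
  refine le_trans ?_ (setIntegral_mono_set hHint hHnn (LE.le.eventuallyLE hsub))
  refine norm_integral_le_of_norm_le (hHint.mono_set hsub) ?_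
  refine ae_restrict_of_forall_mem measurableSet_Icc fun t ht => ?_
  have ht0 : 0 < t := hsub ht
  have hg := good_et ht0.le
  have hp := good_pl hc hC lam
  have e : S.map (ps M) (S.map (et t) (S.map (pl φr lam) f)) =
      S.map (fun s => ps M s * (et t s * pl φr lam s)) f := by
    rw [S.map_mul _ _ (good_ps hM0) (good_mul hg hp), S.map_mul _ _ hg hp]; rfl
  rw [e, norm_smul, Real.norm_of_nonneg (by positivity)]
  have hb1 : ‖S.map (fun s => ps M s * (et t s * pl φr lam s)) f‖ ≤ C * min (M + 1) t⁻¹ := by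
    refine (ContinuousLinearMap.le_opNorm _ _).trans ?_
    refine (mul_le_of_le_one_right (norm_nonneg _) hf).trans ?_
    apply S.map_norm
    intro s hs
    have h1 : ‖ps M s‖ * ‖et t s‖ ≤ min (M + 1) t⁻¹ := by
      have e1 : ‖ps M s‖ = max s 0 * ch M s := by
        unfold ps
        rw [Complex.norm_real, Real.norm_of_nonneg (mul_nonneg (le_max_right _ _) (ch_nonneg _ _))]
      rw [e1, norm_et t s hs]
      have e2 : 0 ≤ max s 0 * ch M s := mul_nonneg (le_max_right _ _) (ch_nonneg _ _)
      refine le_min ?_ ?_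
      · refine le_trans (mul_le_of_le_one_right e2 ?_) (s_ch hM0)
        rw [Real.exp_le_one_iff]; nlinarith
      · have e3 : max s 0 * ch M s ≤ s := by
          rw [max_eq_left hs]; exact mul_le_of_le_one_right hs (ch_le _ _)
        refine (mul_le_mul_of_nonneg_right e3 (Real.exp_nonneg _)).trans ?_
        rw [neg_mul, Real.exp_neg, ← div_eq_mul_inv, div_le_iff₀ (Real.exp_pos _), inv_mul_eq_div,
          le_div_iff₀ ht0]
        have := Real.add_one_le_exp (t * s)
        linarith
    have h2 : ‖pl φr lam s‖ ≤ C := by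
      unfold pl; rw [Complex.norm_real]; exact hC _
    rw [norm_mul, norm_mul, ← mul_assoc, mul_comm C]
    exact mul_le_mul h1 h2 (norm_nonneg _) (by positivity)
  calc _ ≤ (√t)⁻¹ * (C * min (M + 1) t⁻¹) := mul_le_mul_of_nonneg_left hb1 (by positivity)
    _ = C * ((√t)⁻¹ * min (M + 1) t⁻¹) := by ring
    _ ≤ _ := mul_le_mul_of_nonneg_left (hb_ge ht0 (min_le_left _ _) (min_le_right _ _)) hC0.le

theorem approx (hG : Standing d G) (S : SpectralCalc d G)
    (Rj : Fin d → (L2 d →L[ℂ] L2 d)) (hRj : ∀ j, RieszOf d G S j (Rj j))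
    {φr : ℝ → ℝ} (hc : Continuous φr) (hφ2 : HasCompactSupport φr) :
    ∃ C' : ℝ, ∀ lam : ℝ, 0 < lam → lam ≤ 1 → ∀ f : L2 d, ‖f‖ ≤ 1 → ∀ δ : ℝ, 0 < δ →
      ∃ u : Sd d, (∀ j, ‖L (D j u) - Rj j (S.map (pl φr lam) f)‖ ≤ δ) ∧ ‖L (Pop G u)‖ ≤ C' := by
  obtain ⟨κ, hκ, hD⟩ := exists_dense hG
  obtain ⟨hCb, -, lam0, Lam, hlam0, hE⟩ := hG
  have hT : ∀ j k, TG fun x => G x j k := fun j k => CbSmooth.tg (hCb j k)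
  have hell := fun x v => (hE x v).1
  obtain ⟨C, M, hC0, hM0, hC, hM⟩ := phi_bdd hc hφ2
  refine ⟨(∫ t in Set.Ioi (0:ℝ), C * hb (M + 1) t) + 1, fun lam hl hl1 f hf δ hδ => ?_⟩
  set F := S.map (pl φr lam) f with hF
  have hchF : ∀ t, 0 ≤ t → S.map (chC M) (S.map (et t) F) = S.map (et t) F := by
    intro t ht
    have hg := good_et ht
    have hp := good_pl hc hC lam
    have e1 : S.map (et t) F = S.map (fun s => et t s * pl φr lam s) f := by
      rw [S.map_mul _ _ hg hp]; rfl
    have e2 : S.map (chC M) (S.map (fun s => et t s * pl φr lam s) f) =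
        S.map (fun s => chC M s * (et t s * pl φr lam s)) f := by
      rw [S.map_mul _ _ (good_chC M) (good_mul hg hp)]; rfl
    rw [e1, e2]
    rw [S.map_congr _ _ (good_mul (good_chC M) (good_mul hg hp)) (good_mul hg hp)]
    intro s hs
    by_cases h : s ≤ M
    · simp only [chC, ch_one h, Complex.ofReal_one, one_mul]
    · have : φr (s / lam) = 0 := by
        apply hM
        rw [abs_of_nonneg (by positivity), lt_div_iff₀ hl]
        push Not at h
        nlinarith
      simp only [pl, this, Complex.ofReal_zero, mul_zero]
  have hchu : ∀ n, S.map (chC M) (uN S F n) = uN S F n := fun n => ch_uN S F n _ hchF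
  have hr : ∀ n, S.map (rk κ) (S.map (qs M κ) (uN S F n)) = uN S F n := by
    intro n
    rw [← ContinuousLinearMap.comp_apply, ← S.map_mul _ _ (good_rk hκ) (good_qs hM0 κ)]
    conv_rhs => rw [← hchu n]
    congr 2
    ext s
    have := pos_ne hκ s
    simp only [rk, qs, chC]
    rw [Complex.ofReal_mul]
    field_simp
  have hP : ∀ n, S.map (qs M κ) (uN S F n) - (κ : ℂ) • uN S F n = S.map (ps M) (uN S F n) := by
    intro n
    rw [qs_eq, S.map_add _ _ (good_ps hM0) (good_smul _ (good_chC M)),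
      S.map_smul _ _ (good_chC M), add_apply, smul_apply, hchu n, add_sub_cancel_right]
  choose φ hφA hφ0 hφd using fun n => core S hT hlam0 hell hκ hD (S.map (qs M κ) (uN S F n))
  choose w hw1 hw2 using hφd
  have hR : ∀ j, Tendsto (fun n : ℕ => ((Real.sqrt Real.pi)⁻¹ : ℝ) • w n j) atTop (𝓝 (Rj j F)) := by
    intro j
    refine hRj j F (uN S F) (fun n => w n j) (fun n => rfl) fun n ψ => ?_
    have := hw2 n j ψ
    rw [hr n] at this
    exact this
  have hev : ∀ᶠ n : ℕ in atTop, ∀ j, ‖((Real.sqrt Real.pi)⁻¹ : ℝ) • w n j - Rj j F‖ < δ / 2 := by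
    rw [eventually_all]
    intro j
    have := (hR j).eventually (Metric.ball_mem_nhds _ (half_pos hδ))
    simpa only [Metric.mem_ball, dist_eq_norm] using this
  obtain ⟨n, hn, hn1⟩ := (hev.and (eventually_ge_atTop 1)).exists
  have hsc : 0 < (Real.sqrt Real.pi)⁻¹ ∧ (Real.sqrt Real.pi)⁻¹ ≤ 1 := by
    have : 1 ≤ √Real.pi := by
      rw [Real.one_le_sqrt]; linarith [Real.pi_gt_three]
    exact ⟨by positivity, inv_le_one_of_one_le₀ this⟩
  generalize (Real.sqrt Real.pi)⁻¹ = c at hsc hn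
  obtain ⟨hc0, hc1⟩ := hsc
  have hm1 : ∀ᶠ m : ℕ in atTop, ∀ j, ‖L (D j (φ n m)) - w n j‖ < δ / 2 := by
    rw [eventually_all]
    intro j
    have := (hw1 n j).eventually (Metric.ball_mem_nhds _ (half_pos hδ))
    simpa only [Metric.mem_ball, dist_eq_norm] using this
  have hm2 : ∀ᶠ m : ℕ in atTop, ‖L (Pop G (φ n m))‖ < (∫ t in Set.Ioi (0:ℝ), C * hb (M + 1) t) + 1 := by
    have t1 : Tendsto (fun m => L (Pop G (φ n m))) atTop (𝓝 (S.map (ps M) (uN S F n))) := by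
      have h2 := hφ0 n
      rw [hr n] at h2
      have := (hφA n).sub (h2.const_smul (κ : ℂ))
      rw [hP n] at this
      refine this.congr fun m => ?_
      rw [map_add, map_smul, add_sub_cancel_right]
    have h3 := norm_ps_uN S hc hC0 hM0 hC lam f hf n hn1
    exact t1.norm.eventually (gt_mem_nhds (by rw [← hF] at h3; linarith))
  obtain ⟨m, h1, h2⟩ := (hm1.and hm2).exists
  refine ⟨(c : ℂ) • φ n m, fun j => ?_, ?_⟩
  · rw [map_smul, map_smul]
    have e : (c : ℂ) • L (D j (φ n m)) - Rj j F =
        (c : ℂ) • (L (D j (φ n m)) - w n j) + ((c : ℝ) • w n j - Rj j F) := by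
      have e0 : (c : ℂ) • w n j = (c : ℝ) • w n j := by
        rfl
      rw [smul_sub, e0]; abel
    rw [e]
    refine (norm_add_le _ _).trans ?_
    rw [norm_smul, Complex.norm_real, Real.norm_of_nonneg hc0.le]
    have := hn j
    have := h1 j
    have : c * ‖L (D j (φ n m)) - w n j‖ ≤ ‖L (D j (φ n m)) - w n j‖ :=
      mul_le_of_le_one_left (norm_nonneg _) hc1
    linarith
  · rw [map_smul, map_smul, norm_smul, Complex.norm_real, Real.norm_of_nonneg hc0.le]
    exact (mul_le_of_le_one_left (norm_nonneg _) hc1).trans h2.le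

end RC
end

section
open MeasureTheory Filter Topology Complex
open scoped Real ENNReal FourierTransform ComplexConjugate
namespace RC
variable {d : ℕ}

lemma norm_L_fourier (f : Sd d) : ‖L (𝓕 f : Sd d)‖ = ‖L f‖ :=
  SchwartzMap.norm_fourier_toL2_eq f

lemma norm_L_fourierInv (f : Sd d) : ‖L (𝓕⁻ f : Sd d)‖ = ‖L f‖ := by
  rw [← norm_L_fourier (𝓕⁻ f), FourierTransform.fourier_fourierInv_eq]

def k0 (ρ : ℝ) (ξ : Ed d) : ℝ := if ‖ξ‖ ≤ ρ then ‖ξ‖⁻¹ else 0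

lemma k0_memLp (hd : 3 ≤ d) (ρ : ℝ) : MemLp (k0 (d := d) ρ) 2 volume := by
  have hm : Measurable (k0 (d := d) ρ) := by
    unfold k0
    exact Measurable.ite (measurableSet_le measurable_norm measurable_const)
      measurable_norm.inv measurable_const
  rw [memLp_two_iff_integrable_sq_norm hm.aestronglyMeasurable]
  have : Nonempty (Fin d) := ⟨⟨0, by omega⟩⟩
  have key : Integrable (fun x : Ed d => (fun y : ℝ => if y ≤ ρ then y⁻¹ ^ 2 else 0) ‖x‖) volume := by
    refine (integrable_fun_norm_addHaar (volume : Measure (Ed d)) (f := fun y : ℝ => if y ≤ ρ then y⁻¹ ^ 2 else 0)).2 ?_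
    have hfr : Module.finrank ℝ (Ed d) = d := by simp
    rw [hfr]
    have h1 : IntegrableOn (fun y : ℝ => y ^ (d - 3)) (Set.Ioc 0 ρ) :=
      (continuous_pow _).integrableOn_Icc.mono_set Set.Ioc_subset_Icc_self
    have h2 : Integrable (Set.indicator (Set.Ioc 0 ρ) fun y : ℝ => y ^ (d - 3)) :=
      h1.integrable_indicator measurableSet_Ioc
    refine h2.integrableOn.congr_fun (fun y hy => ?_) measurableSet_Ioi
    have hy0 : 0 < y := hy
    by_cases h : y ≤ ρ
    · rw [Set.indicator_of_mem (Set.mem_Ioc.2 ⟨hy0, h⟩)]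
      simp only [if_pos h, smul_eq_mul]
      have : d - 1 = (d - 3) + 2 := by omega
      rw [this, pow_add, mul_assoc, inv_pow, mul_inv_cancel₀ (by positivity), mul_one]
    · rw [Set.indicator_of_notMem (fun hh => h hh.2)]
      simp only [if_neg h, smul_zero]
  refine key.congr (Eventually.of_forall fun x => ?_)
  simp only [k0]
  split_ifs
  · rw [norm_inv, norm_norm]
  · simp

/-- The kernel. -/
def kk (θ : Ed d → ℝ) (x : Ed d) (j : Fin d) (ξ : Ed d) : ℂ :=
  cexp (((2 * π * inner ℝ ξ x : ℝ) : ℂ) * I) * (θ ξ : ℂ) * ((ξ j : ℝ) : ℂ) *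
    ((2 * π * I)⁻¹ * ((‖ξ‖ ^ 2 : ℝ) : ℂ)⁻¹)

lemma kk_norm {θ : Ed d → ℝ} {ρ : ℝ} (h1 : ∀ ξ, |θ ξ| ≤ 1) (h2 : ∀ ξ, ρ < ‖ξ‖ → θ ξ = 0)
    (x : Ed d) (j : Fin d) (ξ : Ed d) : ‖kk θ x j ξ‖ ≤ ‖k0 ρ ξ‖ := by
  unfold kk k0
  split_ifs with h
  · simp only [norm_mul, norm_inv, Complex.norm_exp_ofReal_mul_I, Complex.norm_real, norm_norm, one_mul,
      norm_pow, Complex.norm_I, mul_one, Complex.norm_ofNat, Real.norm_of_nonneg Real.pi_pos.le]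
    have e1 : ‖ξ j‖ ≤ ‖ξ‖ := by simpa using PiLp.norm_apply_le ξ j
    have e2 : ‖θ ξ‖ ≤ 1 := h1 ξ
    have e3 : (2 * π)⁻¹ ≤ 1 := inv_le_one_of_one_le₀ (by linarith [Real.pi_gt_three])
    calc _ ≤ 1 * ‖ξ‖ * (1 * (‖ξ‖ ^ 2)⁻¹) := by gcongr
      _ = ‖ξ‖⁻¹ := by
        by_cases h0 : ‖ξ‖ = 0
        · simp [h0]
        · field_simp
  · rw [h2 ξ (not_le.1 h)]; simp

lemma kk_memLp (hd : 3 ≤ d) {θ : Ed d → ℝ} (hθ : Continuous θ) {ρ : ℝ} (h1 : ∀ ξ, |θ ξ| ≤ 1)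
    (h2 : ∀ ξ, ρ < ‖ξ‖ → θ ξ = 0) (x : Ed d) (j : Fin d) : MemLp (fun ξ => conj (kk θ x j ξ)) 2 volume := by
  refine (k0_memLp hd ρ).mono ?_ (Eventually.of_forall fun ξ => ?_)
  · have hm : Measurable (kk θ x j) := by
      unfold kk
      have := hθ.measurable
      have a1 : Measurable fun ξ : Ed d => cexp (((2 * π * inner ℝ ξ x : ℝ) : ℂ) * I) * (θ ξ : ℂ) * ((ξ j : ℝ) : ℂ) :=
        Continuous.measurable (by fun_prop)
      have a2 : Measurable fun ξ : Ed d => ((‖ξ‖ ^ 2 : ℝ) : ℂ)⁻¹ :=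
        (Continuous.measurable (by fun_prop : Continuous fun ξ : Ed d => ((‖ξ‖ ^ 2 : ℝ) : ℂ))).inv
      exact a1.mul (a2.const_mul _)
    exact (Complex.continuous_conj.measurable.comp hm).aestronglyMeasurable
  · rw [RCLike.norm_conj]; exact kk_norm h1 h2 x j ξ

lemma kk_sum {θ : Ed d → ℝ} (g : Sd d) (x ξ : Ed d) (hξ : ξ ≠ 0) :
    cexp (((2 * π * inner ℝ ξ x : ℝ) : ℂ) * I) * (θ ξ * (𝓕 g : Sd d) ξ) =
      ∑ j, kk θ x j ξ * (𝓕 (D j g) : Sd d) ξ := by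
  simp only [fourier_D, kk]
  have e : ∀ j : Fin d, cexp (((2 * π * inner ℝ ξ x : ℝ) : ℂ) * I) * (θ ξ : ℂ) * ((ξ j : ℝ) : ℂ) *
    ((2 * π * I)⁻¹ * ((‖ξ‖ ^ 2 : ℝ) : ℂ)⁻¹) * (2 * π * I * (ξ j * (𝓕 g : Sd d) ξ)) =
    (cexp (((2 * π * inner ℝ ξ x : ℝ) : ℂ) * I) * (θ ξ * (𝓕 g : Sd d) ξ) * ((‖ξ‖ ^ 2 : ℝ) : ℂ)⁻¹) *
      (((ξ j) ^ 2 : ℝ) : ℂ) := by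
    intro j
    have : (2 * π * I : ℂ) ≠ 0 := by
      simp [Real.pi_ne_zero]
    generalize (((‖ξ‖ ^ 2 : ℝ) : ℂ))⁻¹ = q
    rw [Complex.ofReal_pow]
    field_simp
  simp_rw [e]
  rw [← Finset.mul_sum, ← Complex.ofReal_sum, ← EuclideanSpace.real_norm_sq_eq]
  have h0 : ‖ξ‖ ≠ 0 := norm_ne_zero_iff.2 hξ
  have hne : ((‖ξ‖ ^ 2 : ℝ) : ℂ) ≠ 0 := by exact_mod_cast pow_ne_zero 2 h0
  exact (inv_mul_cancel_right₀ hne _).symm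

lemma low_eq (hd : 3 ≤ d) {θ : Ed d → ℝ} (hT : TG θ) (hθ : Continuous θ) {ρ : ℝ} (h1 : ∀ ξ, |θ ξ| ≤ 1)
    (h2 : ∀ ξ, ρ < ‖ξ‖ → θ ξ = 0) (g : Sd d) (x : Ed d) :
    (𝓕⁻ (M θ (𝓕 g)) : Sd d) x = ∑ j, inner ℂ ((kk_memLp hd hθ h1 h2 x j).toLp) (L (𝓕 (D j g) : Sd d)) := by
  have : Nonempty (Fin d) := ⟨⟨0, by omega⟩⟩
  rw [SchwartzMap.fourierInv_coe, Real.fourierInv_eq']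
  have hi : ∀ j, Integrable fun ξ => kk θ x j ξ * (𝓕 (D j g) : Sd d) ξ := by
    intro j
    have h := kk_memLp hd hθ h1 h2 x j
    have := L2.integrable_inner (𝕜 := ℂ) (h.toLp) (L (𝓕 (D j g) : Sd d))
    refine this.congr ?_
    filter_upwards [h.coeFn_toLp, L_ae (𝓕 (D j g) : Sd d)] with ξ e1 e2
    rw [e1, e2]; simp [mul_comm]
  have e : ∀ j, inner ℂ ((kk_memLp hd hθ h1 h2 x j).toLp) (L (𝓕 (D j g) : Sd d)) =
      ∫ ξ, kk θ x j ξ * (𝓕 (D j g) : Sd d) ξ := by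
    intro j
    rw [inner_L_right]
    apply integral_congr_ae
    filter_upwards [(kk_memLp hd hθ h1 h2 x j).coeFn_toLp] with ξ e1
    rw [e1, Complex.conj_conj]
  simp_rw [e]
  rw [← integral_finsetSum _ fun j _ => hi j]
  apply integral_congr_ae
  have h0 : ∀ᵐ ξ : Ed d, ξ ≠ 0 := by
    rw [ae_iff]; simp
  filter_upwards [h0] with ξ hξ
  rw [← kk_sum g x ξ hξ, M_apply hT, smul_eq_mul]

lemma low_tendsto {ι : Type*} {l : Filter ι} (hd : 3 ≤ d) {θ : Ed d → ℝ} (hT : TG θ)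
    (hθ : Continuous θ) {ρ : ℝ} (h1 : ∀ ξ, |θ ξ| ≤ 1)
    (h2 : ∀ ξ, ρ < ‖ξ‖ → θ ξ = 0) (u : ι → Sd d)
    (hw : ∀ j (h : L2 d), Tendsto (fun i => inner ℂ h (L (D j (u i)))) l (𝓝 0)) (x : Ed d) :
    Tendsto (fun i => (𝓕⁻ (M θ (𝓕 (u i))) : Sd d) x) l (𝓝 0) := by
  simp_rw [low_eq hd hT hθ h1 h2]
  rw [show (0:ℂ) = ∑ j : Fin d, 0 by simp]
  refine tendsto_finsetSum _ fun j _ => ?_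
  have := hw j (𝓕⁻ ((kk_memLp hd hθ h1 h2 x j).toLp))
  refine this.congr fun i => ?_
  rw [← Lp.inner_fourier_eq, FourierTransform.fourier_fourierInv_eq]
  congr 1
  exact SchwartzMap.toLp_fourier_eq _

lemma low_bdd (hd : 3 ≤ d) {θ : Ed d → ℝ} (hT : TG θ)
    (hθ : Continuous θ) {ρ : ℝ} (h1 : ∀ ξ, |θ ξ| ≤ 1)
    (h2 : ∀ ξ, ρ < ‖ξ‖ → θ ξ = 0) {B : ℝ} (u : Sd d) (hB : ∀ j, ‖L (D j u)‖ ≤ B) (x : Ed d) :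
    ‖(𝓕⁻ (M θ (𝓕 u)) : Sd d) x‖ ≤ d * (‖(k0_memLp hd ρ).toLp‖ * B) := by
  rw [low_eq hd hT hθ h1 h2]
  calc _ ≤ ∑ j : Fin d, ‖(k0_memLp hd ρ).toLp‖ * B := by
        refine (norm_sum_le _ _).trans (Finset.sum_le_sum fun j _ => ?_)
        refine (norm_inner_le_norm _ _).trans ?_
        refine mul_le_mul ?_ ?_ (norm_nonneg _) (norm_nonneg _)
        · apply Lp.norm_le_norm_of_ae_le
          filter_upwards [(kk_memLp hd hθ h1 h2 x j).coeFn_toLp, (k0_memLp hd ρ).coeFn_toLp] with ξ e1 e2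
          rw [e1, e2, RCLike.norm_conj]; exact kk_norm h1 h2 x j ξ
        · rw [norm_L_fourier]; exact hB j
    _ = _ := by simp

lemma low_L2 {ι : Type*} {l : Filter ι} [l.IsCountablyGenerated] (hd : 3 ≤ d) {θ : Ed d → ℝ} (hT : TG θ)
    (hθ : Continuous θ) {ρ : ℝ} (h1 : ∀ ξ, |θ ξ| ≤ 1)
    (h2 : ∀ ξ, ρ < ‖ξ‖ → θ ξ = 0) (u : ι → Sd d)
    (hw : ∀ j (h : L2 d), Tendsto (fun i => inner ℂ h (L (D j (u i)))) l (𝓝 0)) {B : ℝ}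
    (hB : ∀ i j, ‖L (D j (u i))‖ ≤ B) {ψ : Ed d → ℝ} (hψ : TG ψ) (hψc : HasCompactSupport ψ) :
    Tendsto (fun i => ‖L (M ψ (𝓕⁻ (M θ (𝓕 (u i)))))‖) l (𝓝 0) := by
  have key : Tendsto (fun i => ‖L (M ψ (𝓕⁻ (M θ (𝓕 (u i)))))‖ ^ 2) l (𝓝 0) := by
    simp_rw [norm_L_sq]
    have hψcont : Continuous ψ := hψ.diff.continuous
    rw [show (0:ℝ) = ∫ x : Ed d, (0:ℝ) by simp]
    refine tendsto_integral_filter_of_dominated_convergence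
      (fun x => (ψ x) ^ 2 * (d * (‖(k0_memLp hd ρ).toLp‖ * B)) ^ 2) ?_ ?_ ?_ ?_
    · exact Eventually.of_forall fun i => (integrable_sq _).aestronglyMeasurable
    · refine Eventually.of_forall fun i => Eventually.of_forall fun x => ?_
      rw [M_apply hψ, norm_mul, mul_pow, Complex.norm_real, norm_mul, norm_pow, norm_norm, norm_pow, norm_norm,
        Real.norm_eq_abs, sq_abs]
      gcongr
      exact low_bdd hd hT hθ h1 h2 (u i) (hB i) x
    · refine Integrable.mul_const ?_ _
      refine Continuous.integrable_of_hasCompactSupport (by fun_prop) ?_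
      have : (fun x => ψ x ^ 2) = fun x => ψ x * ψ x := by ext x; ring
      rw [this]; exact hψc.mul_left
    · refine Eventually.of_forall fun x => ?_
      have t := low_tendsto hd hT hθ h1 h2 u hw x
      have t2 := ((t.const_mul (ψ x : ℂ)).norm).pow 2
      simp only [mul_zero, norm_zero, ne_eq, OfNat.ofNat_ne_zero, not_false_eq_true, zero_pow] at t2
      refine t2.congr fun i => ?_
      rw [M_apply hψ]
  have := (Real.continuous_sqrt.tendsto 0).comp key
  simp only [Real.sqrt_zero] at this
  refine this.congr fun i => ?_
  simp only [Function.comp]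
  exact Real.sqrt_sq (norm_nonneg _)

lemma high_L2 {θ : Ed d → ℝ} (hT : TG θ) {R : ℝ} (hR : 0 < R)
    (h0 : ∀ ξ, 0 ≤ θ ξ) (h1 : ∀ ξ, θ ξ ≤ 1)
    (h2 : ∀ ξ, ‖ξ‖ ≤ R → θ ξ = 1) {B : ℝ} (u : Sd d) (hB : ∀ j, ‖L (D j u)‖ ≤ B) :
    ‖L (u - 𝓕⁻ (M θ (𝓕 u)))‖ ≤ R⁻¹ * √(d * B ^ 2) := by
  have e : u - 𝓕⁻ (M θ (𝓕 u)) = 𝓕⁻ ((𝓕 u : Sd d) - M θ (𝓕 u)) := by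
    have : (𝓕⁻ ((𝓕 u : Sd d) - M θ (𝓕 u)) : Sd d) = 𝓕⁻ (𝓕 u : Sd d) - 𝓕⁻ (M θ (𝓕 u)) :=
      map_sub (FourierTransform.fourierCLE ℂ (Sd d)).symm _ _
    rw [this, FourierTransform.fourierInv_fourier_eq]
  rw [e, norm_L_fourierInv]
  refine (sq_le_sq₀ (norm_nonneg _) (by positivity)).1 ?_
  rw [mul_pow, Real.sq_sqrt (by positivity), norm_L_sq]
  calc _ ≤ ∫ ξ, R⁻¹ ^ 2 * ∑ j, ‖(𝓕 (D j u) : Sd d) ξ‖ ^ 2 := by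
        refine integral_mono (integrable_sq _)
          ((integrable_finsetSum _ fun j _ => integrable_sq _).const_mul _) fun ξ => ?_
        simp only [sub_apply, M_apply hT, fourier_D]
        have es : ∑ j : Fin d, ‖(2 * π * I : ℂ) * (ξ j * (𝓕 u : Sd d) ξ)‖ ^ 2 =
            (2 * π) ^ 2 * ‖ξ‖ ^ 2 * ‖(𝓕 u : Sd d) ξ‖ ^ 2 := by
          rw [EuclideanSpace.real_norm_sq_eq, Finset.mul_sum, Finset.sum_mul]
          refine Finset.sum_congr rfl fun j _ => ?_
          simp only [norm_mul, Complex.norm_I, Complex.norm_real, Complex.norm_ofNat,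
            Real.norm_of_nonneg Real.pi_pos.le, mul_pow, Real.norm_eq_abs, sq_abs]
          ring
        rw [es]
        by_cases hξ : ‖ξ‖ ≤ R
        · rw [h2 ξ hξ]; simp only [Complex.ofReal_one, one_mul, sub_self, norm_zero, ne_eq, OfNat.ofNat_ne_zero, not_false_eq_true, zero_pow]; positivity
        · push Not at hξ
          have e1 : (𝓕 u : Sd d) ξ - θ ξ * (𝓕 u : Sd d) ξ = ((1 - θ ξ : ℝ) : ℂ) * (𝓕 u : Sd d) ξ := by
            push_cast; ring
          rw [e1, norm_mul, Complex.norm_real, Real.norm_of_nonneg (by linarith [h1 ξ]), mul_pow]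
          have e2 : (1 - θ ξ) ^ 2 ≤ 1 := by
            have := h0 ξ; have := h1 ξ; nlinarith
          have e3 : 1 ≤ R⁻¹ ^ 2 * ((2 * π) ^ 2 * ‖ξ‖ ^ 2) := by
            have a1 : 1 ≤ R⁻¹ * ‖ξ‖ := by
              rw [inv_mul_eq_div, le_div_iff₀ hR]; linarith
            have a2 : 1 ≤ 2 * π := by linarith [Real.pi_gt_three]
            have a3 : 1 ≤ (R⁻¹ * ‖ξ‖) * (2 * π) := by nlinarith
            have a4 : R⁻¹ ^ 2 * ((2 * π) ^ 2 * ‖ξ‖ ^ 2) = ((R⁻¹ * ‖ξ‖) * (2 * π)) ^ 2 := by ring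
            rw [a4]; exact one_le_pow₀ a3
          have e4 := mul_le_mul_of_nonneg_right (e2.trans e3) (sq_nonneg ‖(𝓕 u : Sd d) ξ‖)
          linarith
    _ = R⁻¹ ^ 2 * ∑ j, ‖L (D j u)‖ ^ 2 := by
        rw [integral_const_mul, integral_finsetSum _ fun j _ => integrable_sq _]
        simp_rw [← norm_L_sq, norm_L_fourier]
    _ ≤ R⁻¹ ^ 2 * ∑ j : Fin d, B ^ 2 := by
        gcongr with j
        exact hB j
    _ = _ := by simp

theorem local_compact {ι : Type*} {l : Filter ι} [l.IsCountablyGenerated] (hd : 3 ≤ d)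
    (u : ι → Sd d)
    (hw : ∀ j (h : L2 d), Tendsto (fun i => inner ℂ h (L (D j (u i)))) l (𝓝 0)) {B : ℝ}
    (hB : ∀ i j, ‖L (D j (u i))‖ ≤ B) {ψ : Ed d → ℝ} (hψ : TG ψ) (hψc : HasCompactSupport ψ) :
    Tendsto (fun i => ‖L (M ψ (u i))‖) l (𝓝 0) := by
  obtain ⟨C, hC⟩ := hψ.diff.continuous.bounded_above_of_compact_support hψc
  have hC0 : 0 ≤ C := (norm_nonneg _).trans (hC 0)
  rw [Metric.tendsto_nhds]
  intro ε hε
  obtain ⟨R, hR, hRε⟩ : ∃ R : ℝ, 0 < R ∧ C * (R⁻¹ * √(d * B ^ 2)) < ε / 2 := by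
    have : Tendsto (fun R : ℝ => C * (R⁻¹ * √(d * B ^ 2))) atTop (𝓝 (C * (0 * √(d * B ^ 2)))) :=
      (tendsto_inv_atTop_zero.mul_const _).const_mul _
    simp only [zero_mul, mul_zero] at this
    obtain ⟨R, h1, h2⟩ := ((this.eventually (gt_mem_nhds (half_pos hε))).and (eventually_gt_atTop 0)).exists
    exact ⟨R, h2, h1⟩
  let θb : ContDiffBump (0 : Ed d) := ⟨R, 2 * R, hR, by linarith⟩
  have hT : TG (θb : Ed d → ℝ) := θb.hasCompactSupport.hasTemperateGrowth θb.contDiff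
  have h0 : ∀ ξ, 0 ≤ θb ξ := fun ξ => θb.nonneg
  have h1 : ∀ ξ, θb ξ ≤ 1 := fun ξ => θb.le_one
  have h1' : ∀ ξ, |θb ξ| ≤ 1 := fun ξ => by rw [abs_of_nonneg (h0 ξ)]; exact h1 ξ
  have h2 : ∀ ξ, ‖ξ‖ ≤ R → θb ξ = 1 := fun ξ h => θb.one_of_mem_closedBall (by simpa using h)
  have h3 : ∀ ξ, 2 * R < ‖ξ‖ → θb ξ = 0 := fun ξ h => θb.zero_of_le_dist (by
    rw [dist_zero_right]; exact h.le)
  have t := low_L2 hd hT θb.continuous h1' h3 u hw hB hψ hψc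
  filter_upwards [t.eventually (gt_mem_nhds (half_pos hε))] with i hi
  rw [dist_zero_right, norm_norm]
  have e : M ψ (u i) = M ψ (u i - 𝓕⁻ (M θb (𝓕 (u i)))) + M ψ (𝓕⁻ (M θb (𝓕 (u i)))) := by
    rw [← map_add, sub_add_cancel]
  rw [e, map_add]
  have a1 := norm_M_le hψ (C := C) hC (u i - 𝓕⁻ (M θb (𝓕 (u i))))
  have a2 := mul_le_mul_of_nonneg_left (high_L2 hT hR h0 h1 h2 (u i) (hB i)) hC0
  have a3 := norm_add_le (L (M ψ (u i - 𝓕⁻ (M θb (𝓕 (u i)))))) (L (M ψ (𝓕⁻ (M θb (𝓕 (u i))))))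
  linarith

end RC
end

section
open MeasureTheory Filter Topology Complex
open scoped Real ENNReal FourierTransform ComplexConjugate
namespace RC
variable {d : ℕ} {G : Ed d → Fin d → Fin d → ℝ}

lemma loc_term {χ a : Ed d → ℝ} (hχ : TG χ) (ha : TG a) (u v : Sd d) (j : Fin d) :
    inner ℂ (L (M χ (D j u))) (L (M a (M χ v))) =
      inner ℂ (L (D j (M (fun x => χ x * χ x) u))) (L (M a v)) -
      inner ℂ (L (M (dd j fun x => χ x * χ x) u)) (L (M a v)) := by
  have hχ2 : TG (fun x => χ x * χ x) := hχ.mul hχ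
  have e1 : M a (M χ v) = M χ (M a v) := by
    ext x; simp only [M_apply ha, M_apply hχ]; ring
  rw [e1, M_symm hχ, M_M hχ hχ, D_M hχ2, map_add, inner_add_left, add_sub_cancel_right]

lemma loc_energy (hT : ∀ j k, TG fun x => G x j k) {lam : ℝ}
    (h : ∀ (x : Ed d) (v : Fin d → ℝ),
      lam * ∑ j, v j ^ 2 ≤ (∑ j, ∑ k, G x j k * v j * v k))
    {χ : Ed d → ℝ} (hχ : TG χ) (u : Sd d) :
    lam * ∑ j, ‖L (M χ (D j u))‖ ^ 2 ≤ ‖L (M (fun x => χ x * χ x) u)‖ * ‖L (Pop G u)‖ +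
      ∑ j, ∑ k, ‖L (M (dd j fun x => χ x * χ x) u)‖ * ‖L (M (fun x => G x j k) (D k u))‖ := by
  refine (ellip hT h (fun j => M χ (D j u))).trans ?_
  have e : ∑ j, ∑ k, inner ℂ (L (M χ (D j u))) (L (M (fun x => G x j k) (M χ (D k u)))) =
      inner ℂ (L (M (fun x => χ x * χ x) u)) (L (Pop G u)) -
      ∑ j, ∑ k, inner ℂ (L (M (dd j fun x => χ x * χ x) u)) (L (M (fun x => G x j k) (D k u))) := by
    rw [inner_P, ← Finset.sum_sub_distrib]
    refine Finset.sum_congr rfl fun j _ => ?_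
    rw [← Finset.sum_sub_distrib]
    exact Finset.sum_congr rfl fun k _ => loc_term hχ (hT j k) u _ j
  rw [e]
  refine (Complex.re_le_norm _).trans ((norm_sub_le _ _).trans ?_)
  refine add_le_add (norm_inner_le_norm _ _) ?_
  refine (norm_sum_le _ _).trans (Finset.sum_le_sum fun j _ => ?_)
  exact (norm_sum_le _ _).trans (Finset.sum_le_sum fun k _ => norm_inner_le_norm _ _)

lemma dd_compact {a : Ed d → ℝ} (ha : HasCompactSupport a) (j : Fin d) : HasCompactSupport (dd j a) :=
  ha.fderiv_apply (𝕜 := ℝ) _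

lemma loc_grad (hd : 3 ≤ d) (hG : Standing d G) {ι : Type*} {l : Filter ι} [l.IsCountablyGenerated]
    (u : ι → Sd d) (hw : ∀ j (h : L2 d), Tendsto (fun i => inner ℂ h (L (D j (u i)))) l (𝓝 0)) {B : ℝ}
    (hB : ∀ i j, ‖L (D j (u i))‖ ≤ B) {C : ℝ} (hP : ∀ i, ‖L (Pop G (u i))‖ ≤ C)
    {χ : Ed d → ℝ} (hχ : TG χ) (hχc : HasCompactSupport χ) (m : Fin d) :
    Tendsto (fun i => ‖L (M χ (D m (u i)))‖) l (𝓝 0) := by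
  obtain ⟨hcb, -, lam, Lam, h0, hE⟩ := hG
  have hT : ∀ j k, TG fun x => G x j k := fun j k => CbSmooth.tg (hcb j k)
  choose K hK using fun j k => CbSmooth.bdd (hcb j k)
  have hK0 : ∀ j k, 0 ≤ K j k := fun j k => (abs_nonneg _).trans (hK j k 0)
  have hχ2 : TG (fun x => χ x * χ x) := hχ.mul hχ
  have hc2 : HasCompactSupport (fun x => χ x * χ x) := hχc.mul_right
  have t1 := local_compact hd u hw hB hχ2 hc2
  have t2 := fun j => local_compact hd u hw hB (hχ2.dd j) (dd_compact hc2 j)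
  have lim : Tendsto (fun i => lam⁻¹ * (‖L (M (fun x => χ x * χ x) (u i))‖ * C +
      ∑ j, ∑ k, ‖L (M (dd j fun x => χ x * χ x) (u i))‖ * (K j k * B))) l (𝓝 0) := by
    have := ((t1.mul_const C).add (tendsto_finset_sum Finset.univ fun j _ =>
      tendsto_finset_sum Finset.univ fun k _ => (t2 j).mul_const (K j k * B))).const_mul lam⁻¹
    simpa using this
  have sq : Tendsto (fun i => ‖L (M χ (D m (u i)))‖ ^ 2) l (𝓝 0) := by
    refine squeeze_zero (fun i => by positivity) (fun i => ?_) lim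
    rw [inv_mul_eq_div, le_div_iff₀ h0, mul_comm]
    have e := loc_energy hT (fun x v => (hE x v).1) hχ (u i)
    refine le_trans ?_ (e.trans ?_)
    · gcongr
      exact Finset.single_le_sum (f := fun j => ‖L (M χ (D j (u i)))‖ ^ 2) (fun j _ => by positivity)
        (Finset.mem_univ m)
    · gcongr with j _ k _
      · exact hP i
      · exact (norm_M_le (hT j k) (hK j k) _).trans (mul_le_mul_of_nonneg_left (hB i k) (hK0 j k))
  have := sq.sqrt
  simpa [Real.sqrt_sq (norm_nonneg _)] using this

lemma exists_near (T : L2 d →L[ℂ] L2 d) : ∃ f : L2 d, ‖f‖ ≤ 1 ∧ ‖T‖ ≤ 2 * ‖T f‖ := by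
  by_contra! hcon
  have h0 : 0 < ‖T‖ := by have := hcon 0 (by simp); simpa using this
  have : ‖T‖ ≤ ‖T‖ / 2 := by
    refine T.opNorm_le_of_unit_norm (by positivity) fun x hx => ?_
    have := hcon x hx.le
    linarith
  linarith

lemma Mb_L {b : Ed d → ℝ} (hb : TG b) (N : L2 d →L[ℂ] L2 d)
    (hN : ∀ f : L2 d, ⇑(N f) =ᵐ[volume] fun x => ((b x : ℝ) : ℂ) * f x) (g : Sd d) :
    N (L g) = L (M b g) := by
  refine Lp.ext ?_
  filter_upwards [hN (L g), L_ae g, L_ae (M b g)] with x h1 h2 h3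
  rw [h1, h2, h3, M_apply hb]

set_option maxHeartbeats 1000000 in
theorem main (hd : 3 ≤ d) (hG : Standing d G) (S : SpectralCalc d G)
    (Rj : Fin d → (L2 d →L[ℂ] L2 d)) (hRj : ∀ j, RieszOf d G S j (Rj j))
    (b : Fin d → Fin d → Ed d → ℝ)
    (hb : ∀ j k, ContDiff ℝ (⊤ : ℕ∞) (b j k) ∧ HasCompactSupport (b j k))
    (Mb : Fin d → Fin d → (L2 d →L[ℂ] L2 d))
    (hMb : ∀ (j k : Fin d) (f : L2 d),
      (⇑(Mb j k f)) =ᵐ[volume] fun x => ((b j k x : ℝ) : ℂ) * f x)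
    (φr : ℝ → ℝ) (hc : Continuous φr) (hφ2 : HasCompactSupport φr) :
    Tendsto
      (fun lam : ℝ =>
        ‖(-(∑ j, ∑ k, (ContinuousLinearMap.adjoint (Rj j)).comp
              ((Mb j k).comp (Rj k)))).comp (S.map (pl φr lam))‖)
      (𝓝[>] (0:ℝ)) (𝓝 0) := by
  have hT : ∀ j k, TG fun x => G x j k := fun j k => CbSmooth.tg (hG.1 j k)
  have hbT : ∀ j k, TG (b j k) := fun j k => (hb j k).2.hasTemperateGrowth (hb j k).1
  set A := -(∑ j, ∑ k, (ContinuousLinearMap.adjoint (Rj j)).comp ((Mb j k).comp (Rj k))) with hA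
  choose f hf1 hf2 using fun lam : ℝ => exists_near (A.comp (S.map (pl φr lam)))
  obtain ⟨C, -, -, -, hC, -⟩ := phi_bdd hc hφ2
  have hC0 : 0 ≤ C := (abs_nonneg _).trans (hC 0)
  obtain ⟨C', hap⟩ := approx hG S Rj hRj hc hφ2
  set F : ℝ → L2 d := fun lam => S.map (pl φr lam) (f lam) with hF
  have hFn : ∀ lam, ‖F lam‖ ≤ C := fun lam => by
    have := (S.map (pl φr lam)).le_of_opNorm_le_of_le (norm_pl S hC lam) (hf1 lam)
    simpa using this
  have hex : ∀ lam : ℝ, ∃ u : Sd d, ((0 < lam ∧ lam ≤ 1) → ∀ j, ‖L (D j u) - Rj j (F lam)‖ ≤ lam) ∧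
      ‖L (Pop G u)‖ ≤ |C'| ∧ (¬ (0 < lam ∧ lam ≤ 1) → u = 0) := by
    intro lam
    by_cases hl : 0 < lam ∧ lam ≤ 1
    · obtain ⟨u, h1, h2⟩ := hap lam hl.1 hl.2 (f lam) (hf1 lam) lam hl.1
      exact ⟨u, fun _ => h1, h2.trans (le_abs_self _), fun h => absurd hl h⟩
    · exact ⟨0, fun h => absurd h hl, by simp, fun _ => rfl⟩
  choose u hu1 hu2 hu3 using hex
  have hev : ∀ᶠ lam : ℝ in 𝓝[>] (0:ℝ), 0 < lam ∧ lam ≤ 1 := by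
    filter_upwards [Ioc_mem_nhdsGT (zero_lt_one (α := ℝ))] with x hx using hx
  have hid : Tendsto (fun lam : ℝ => lam) (𝓝[>] (0:ℝ)) (𝓝 0) := nhdsWithin_le_nhds
  have hRb : ∀ j lam, ‖Rj j (F lam)‖ ≤ ‖Rj j‖ * C := fun j lam => (Rj j).le_opNorm_of_le (hFn lam)
  have hB : ∀ lam j, ‖L (D j (u lam))‖ ≤ (∑ j, ‖Rj j‖) * C + 1 := by
    intro lam j
    have hs : ‖Rj j‖ ≤ ∑ j, ‖Rj j‖ :=
      Finset.single_le_sum (f := fun j => ‖Rj j‖) (fun j _ => norm_nonneg _) (Finset.mem_univ j)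
    by_cases hl : 0 < lam ∧ lam ≤ 1
    · have h1 := hu1 lam hl j
      have h2 : ‖L (D j (u lam))‖ ≤ ‖L (D j (u lam)) - Rj j (F lam)‖ + ‖Rj j (F lam)‖ :=
        norm_le_norm_sub_add _ _
      have h3 := hRb j lam
      have h4 := mul_le_mul_of_nonneg_right hs hC0
      linarith [hl.2]
    · rw [hu3 lam hl]
      have : 0 ≤ ∑ j, ‖Rj j‖ := Finset.sum_nonneg fun j _ => norm_nonneg _
      simp only [map_zero, norm_zero]; positivity
  have hw : ∀ j (h : L2 d), Tendsto (fun lam => inner ℂ h (L (D j (u lam)))) (𝓝[>] (0:ℝ)) (𝓝 0) := by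
    intro j h
    have w1 := weak0 S hT hc hφ2 f hf1 (ContinuousLinearMap.adjoint (Rj j) h)
    have w2 : Tendsto (fun lam => inner ℂ h (L (D j (u lam)) - Rj j (F lam))) (𝓝[>] (0:ℝ)) (𝓝 0) := by
      refine squeeze_zero_norm' (a := fun lam : ℝ => ‖h‖ * lam) ?_ (by simpa using hid.const_mul ‖h‖)
      filter_upwards [hev] with lam hl
      exact (norm_inner_le_norm _ _).trans (mul_le_mul_of_nonneg_left (hu1 lam hl j) (norm_nonneg _))
    have := w1.add w2
    rw [add_zero] at this
    refine this.congr fun lam => ?_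
    rw [ContinuousLinearMap.adjoint_inner_left, ← inner_add_right]
    congr 1
    simp [hF]
  have key : ∀ j k, Tendsto (fun lam => ‖Mb j k (Rj k (F lam))‖) (𝓝[>] (0:ℝ)) (𝓝 0) := by
    intro j k
    have g := loc_grad hd hG u hw hB hu2 (hbT j k) (hb j k).2 k
    have lim := (hid.const_mul ‖Mb j k‖).add g
    rw [mul_zero, add_zero] at lim
    refine squeeze_zero' (Eventually.of_forall fun _ => norm_nonneg _) ?_ lim
    filter_upwards [hev] with lam hl
    have e : Mb j k (Rj k (F lam)) = - Mb j k (L (D k (u lam)) - Rj k (F lam)) + L (M (b j k) (D k (u lam))) := by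
      rw [map_sub, Mb_L (hbT j k) (Mb j k) (hMb j k)]; abel
    rw [e]
    refine (norm_add_le _ _).trans (add_le_add ?_ le_rfl)
    rw [norm_neg]
    exact (Mb j k).le_opNorm_of_le (hu1 lam hl k)
  have lim : Tendsto (fun lam => 2 * ∑ j, ∑ k, ‖ContinuousLinearMap.adjoint (Rj j)‖ * ‖Mb j k (Rj k (F lam))‖)
      (𝓝[>] (0:ℝ)) (𝓝 0) := by
    have := (tendsto_finset_sum Finset.univ fun j _ =>
      tendsto_finset_sum Finset.univ fun k _ =>
        (key j k).const_mul ‖ContinuousLinearMap.adjoint (Rj j)‖).const_mul 2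
    simpa using this
  refine squeeze_zero (fun _ => norm_nonneg _) (fun lam => ?_) lim
  refine (hf2 lam).trans (mul_le_mul_of_nonneg_left ?_ zero_le_two)
  have e : (A.comp (S.map (pl φr lam))) (f lam) =
      -∑ j, ∑ k, ContinuousLinearMap.adjoint (Rj j) (Mb j k (Rj k (F lam))) := by
    simp [hA, hF]
  rw [e, norm_neg]
  refine (norm_sum_le _ _).trans (Finset.sum_le_sum fun j _ => ?_)
  refine (norm_sum_le _ _).trans (Finset.sum_le_sum fun k _ => ?_)
  exact ContinuousLinearMap.le_opNorm _ _

end RC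
end

/-- **Proposition (smallness of `R_c φ(P/λ)` at low energy).** Let `d ≥ 3`,
`P = -div(G∇)` as above, `b_{jk} ∈ C₀^∞(ℝ^d)` and
`R_c = -∑_{j,k} R(j)^* b_{jk}(x) R(k)` with `R(j)` the Riesz transform components of
`P`.  Then for `φ ∈ C₀^∞(ℝ)`, `‖R_c φ(P/λ)‖_{L²→L²} → 0` as `λ → 0⁺`. -/
theorem statement15 (d : ℕ) (hd : 3 ≤ d) (G : Ed d → Fin d → Fin d → ℝ)
    (hG : Standing d G) (S : SpectralCalc d G)
    (Rj : Fin d → (L2 d →L[ℂ] L2 d)) (hRj : ∀ j, RieszOf d G S j (Rj j))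
    (b : Fin d → Fin d → Ed d → ℝ)
    (hb : ∀ j k, ContDiff ℝ (⊤ : ℕ∞) (b j k) ∧ HasCompactSupport (b j k))
    (Mb : Fin d → Fin d → (L2 d →L[ℂ] L2 d))
    (hMb : ∀ (j k : Fin d) (f : L2 d),
      (⇑(Mb j k f)) =ᵐ[volume] fun x => ((b j k x : ℝ) : ℂ) * f x)
    (φr : ℝ → ℝ) (hφ1 : ContDiff ℝ (⊤ : ℕ∞) φr) (hφ2 : HasCompactSupport φr) :
    Tendsto
      (fun lam : ℝ =>
        ‖(-(∑ j, ∑ k, (ContinuousLinearMap.adjoint (Rj j)).comp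
              ((Mb j k).comp (Rj k)))).comp
            (S.map fun l => ((φr (l / lam) : ℝ) : ℂ))‖)
      (𝓝[>] (0:ℝ)) (𝓝 0) := by
  exact RC.main hd hG S Rj hRj b hb Mb hMb φr hφ1.continuous hφ2
end
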